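/- arXiv:1604.00618 — 3 statements merged into one kernel-verified Lean document; each statement's English description precedes it below -/
import Mathlib

section
/- Let L be a locally compact Hausdorff topological space and let Y be a Banach space. If the pair (c₀, Y) has the BPBp for compact operators, then the pair (C₀(L), Y) has the BPBp for compact operators. -/
open MeasureTheory

noncomputable section

/-- A pair `(X, Y)` of normed spaces has the Bishop–Phelps–Bollobás property for compact
operators with the function `η`. -/
def BPBpCompactWith (𝕜 : Type*) [RCLike 𝕜] (X Y : Type*) [NormedAddCommGroup X]
    [NormedSpace 𝕜 X] [NormedAddCommGroup Y] [NormedSpace 𝕜 Y] (η : ℝ → ℝ) : Prop :=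
  ∀ ε : ℝ, 0 < ε → 0 < η ε ∧
    ∀ T : X →L[𝕜] Y, IsCompactOperator T → ‖T‖ = 1 →
      ∀ x₀ : X, ‖x₀‖ = 1 → 1 - η ε < ‖T x₀‖ →
        ∃ S : X →L[𝕜] Y, ∃ x₁ : X, IsCompactOperator S ∧ ‖S‖ = 1 ∧ ‖x₁‖ = 1 ∧
          ‖S x₁‖ = 1 ∧ ‖x₀ - x₁‖ < ε ∧ ‖S - T‖ < ε

/-- A pair `(X, Y)` has the Bishop–Phelps–Bollobás property for compact operators. -/
def BPBpCompact (𝕜 : Type*) [RCLike 𝕜] (X Y : Type*) [NormedAddCommGroup X]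
    [NormedSpace 𝕜 X] [NormedAddCommGroup Y] [NormedSpace 𝕜 Y] : Prop :=
  ∃ η : ℝ → ℝ, BPBpCompactWith 𝕜 X Y η

/-!
The norm of `T f`, for `T` compact and `f` in a ball, is determined up to a small error by finitely
many functionals on `C₀(L)`. These are dominated by one finite Radon measure `μ`, the sum of their
total variations, so they have densities in `L¹(μ)`. Up to a set of small measure, `L` splits into
finitely many disjoint compact sets `K₁, …, Kₙ` on which the densities are nearly constant and a
given `f₀` oscillates little. Averaging over the `Kⱼ` is a contraction `P` onto `ℓ∞ⁿ`, bump
functions at the `Kⱼ` give a contractive right inverse `i` of `P`, and `T` is close to `T ∘ i ∘ P`.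
Moreover, `f₀` can be modified near the `Kⱼ` so as to have prescribed averages there, moving it
hardly more than its averages. Hence a norm-attaining approximation on `ℓ∞ⁿ` pulls back along `P`
to one on `C₀(L)`. Finally, `ℓ∞ⁿ` is an M-summand of `c₀`, so it inherits the property from `c₀`
with a function `η` that does not depend on `n`.
-/

open scoped ZeroAtInfty CompactlySupported NNReal

section ZeroAtInfty

variable {𝕜 : Type*} [RCLike 𝕜] {E : Type*} [NormedAddCommGroup E] {L : Type*} [TopologicalSpace L]

lemma zeroAtInfty_norm_le {g : C₀(L, E)} {C : ℝ} (hC : 0 ≤ C) (h : ∀ x, ‖g x‖ ≤ C) :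
    ‖g‖ ≤ C := by
  rw [← ZeroAtInftyContinuousMap.norm_toBCF_eq_norm]
  exact (BoundedContinuousFunction.norm_le hC).2 h

lemma zeroAtInfty_norm_apply_le (g : C₀(L, E)) (x : L) : ‖g x‖ ≤ ‖g‖ := by
  rw [← ZeroAtInftyContinuousMap.norm_toBCF_eq_norm]
  exact g.toBCF.norm_coe_le_norm x

lemma zeroAtInfty_integrable [MeasurableSpace L] [OpensMeasurableSpace L] (g : C₀(L, 𝕜))
    (μ : Measure L) [IsFiniteMeasure μ] : Integrable g μ :=
  .of_bound (map_continuous g).aestronglyMeasurable ‖g‖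
    (.of_forall (zeroAtInfty_norm_apply_le g))

lemma zeroAtInfty_integrable_smul [MeasurableSpace L] [OpensMeasurableSpace L] {F : Type*}
    [NormedAddCommGroup F] [NormedSpace 𝕜 F] {μ : Measure L} {H : L → F} (hH : Integrable H μ)
    (g : C₀(L, 𝕜)) : Integrable (fun x => g x • H x) μ :=
  hH.bdd_smul ‖g‖ (map_continuous g).aestronglyMeasurable
    (.of_forall (zeroAtInfty_norm_apply_le g))

/-- A compactly supported real function regarded as an element of `C₀(L, 𝕜)`, so that it acts
on `C₀(L, 𝕜)` by multiplication. -/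
def realCutoff (𝕜 : Type*) [RCLike 𝕜] (u : C_c(L, ℝ)) : C₀(L, 𝕜) where
  toFun x := (u x : 𝕜)
  continuous_toFun := RCLike.continuous_ofReal.comp (map_continuous u)
  zero_at_infty' := (u.hasCompactSupport.comp_left (g := fun r : ℝ => (r : 𝕜))
    RCLike.ofReal_zero).is_zero_at_infty

@[simp]
lemma realCutoff_apply (u : C_c(L, ℝ)) (x : L) : realCutoff 𝕜 u x = (u x : 𝕜) := rfl

lemma hasCompactSupport_realCutoff_mul (u : C_c(L, ℝ)) (g : C₀(L, 𝕜)) :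
    HasCompactSupport (realCutoff 𝕜 u * g) :=
  (u.hasCompactSupport.comp_left (g := fun r : ℝ => (r : 𝕜)) RCLike.ofReal_zero).mul_right

lemma exists_compactlySupported_eqOn_one [T2Space L] [LocallyCompactSpace L] {K : Set L}
    (hK : IsCompact K) :
    ∃ u : C_c(L, ℝ), Set.EqOn u 1 K ∧ ∀ x, u x ∈ Set.Icc 0 1 := by
  obtain ⟨u, hu_one, -, hu_supp, hu_mem⟩ :=
    exists_continuous_one_zero_of_isCompact hK isClosed_empty (Set.disjoint_empty K)
  exact ⟨⟨u, hu_supp⟩, hu_one, hu_mem⟩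

lemma exists_norm_sub_realCutoff_mul_le [T2Space L] [LocallyCompactSpace L] (g : C₀(L, 𝕜))
    {ε : ℝ} (hε : 0 < ε) :
    ∃ u : C_c(L, ℝ), (∀ x, u x ∈ Set.Icc 0 1) ∧ ‖g - realCutoff 𝕜 u * g‖ ≤ ε := by
  have g_small : ∀ᶠ x in Filter.cocompact L, ‖g x‖ < ε :=
    (tendsto_zero_iff_norm_tendsto_zero.1 g.zero_at_infty').eventually (gt_mem_nhds hε)
  obtain ⟨K, hK, hKg⟩ := Filter.mem_cocompact.1 g_small
  obtain ⟨u, hu_one, hu_mem⟩ := exists_compactlySupported_eqOn_one hK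
  refine ⟨u, hu_mem, zeroAtInfty_norm_le hε.le fun x => ?_⟩
  have factor : (g - realCutoff 𝕜 u * g) x = ((1 - u x : ℝ) : 𝕜) * g x := by
    simp [sub_mul]
  rw [factor, norm_mul, RCLike.norm_ofReal, abs_of_nonneg (sub_nonneg.2 (hu_mem x).2)]
  by_cases hx : x ∈ K
  · simp [hu_one hx, hε.le]
  · have hgx : ‖g x‖ < ε := hKg hx
    exact (mul_le_of_le_one_left (norm_nonneg _) (by linarith [(hu_mem x).1])).trans hgx.le

end ZeroAtInfty

section Variation

variable {𝕜 : Type*} [RCLike 𝕜] {L : Type*} [TopologicalSpace L] (φ : C₀(L, 𝕜) →L[𝕜] 𝕜)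

/-- The total variation functional `|φ|` of a functional `φ` on `C₀(L, 𝕜)`: its value at a
nonnegative `f` is the supremum of `‖φ g‖` over all `g` dominated by `f`. -/
def variation (f : C_c(L, ℝ≥0)) : ℝ≥0 :=
  ⨆ g : {g : C₀(L, 𝕜) // ∀ x, ‖g x‖₊ ≤ f x}, ‖φ g‖₊

variable {φ}

lemma nnnorm_apply_le_of_dominated {f : C_c(L, ℝ≥0)} {M : ℝ≥0} (hM : ∀ x, f x ≤ M)
    (g : {g : C₀(L, 𝕜) // ∀ x, ‖g x‖₊ ≤ f x}) : ‖φ g‖₊ ≤ ‖φ‖₊ * M :=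
  (φ.le_opNNNorm g).trans <| mul_le_mul_right
    (show ‖(g : C₀(L, 𝕜))‖₊ ≤ M from zeroAtInfty_norm_le M.2 fun x => (g.2 x).trans (hM x)) _

lemma bddAbove_range_variation (f : C_c(L, ℝ≥0)) :
    BddAbove (Set.range fun g : {g : C₀(L, 𝕜) // ∀ x, ‖g x‖₊ ≤ f x} => ‖φ g‖₊) := by
  obtain ⟨M, hM⟩ := (f.hasCompactSupport.isCompact_range (map_continuous f)).bddAbove
  exact ⟨‖φ‖₊ * M, Set.forall_mem_range.2 <|
    nnnorm_apply_le_of_dominated fun x => hM (Set.mem_range_self x)⟩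

lemma nnnorm_apply_le_variation {f : C_c(L, ℝ≥0)} {g : C₀(L, 𝕜)} (hg : ∀ x, ‖g x‖₊ ≤ f x) :
    ‖φ g‖₊ ≤ variation φ f :=
  le_ciSup (bddAbove_range_variation f) (⟨g, hg⟩ : {g : C₀(L, 𝕜) // ∀ x, ‖g x‖₊ ≤ f x})

lemma variation_le_nnnorm {f : C_c(L, ℝ≥0)} (hf : ∀ x, f x ≤ 1) : variation φ f ≤ ‖φ‖₊ :=
  ciSup_le' fun g => (nnnorm_apply_le_of_dominated hf g).trans_eq (mul_one _)

lemma mul_variation_le (c : ℝ≥0) (f : C_c(L, ℝ≥0)) :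
    c * variation φ f ≤ variation φ (c • f) := by
  refine NNReal.mul_iSup_le fun g => ?_
  have hcg : ∀ x, ‖(((c : ℝ) : 𝕜) • (g : C₀(L, 𝕜))) x‖₊ ≤ (c • f) x := fun x => by
    simpa [nnnorm_smul] using mul_le_mul_right (g.2 x) c
  simpa [nnnorm_smul] using nnnorm_apply_le_variation (φ := φ) hcg

lemma variation_smul (c : ℝ≥0) (f : C_c(L, ℝ≥0)) :
    variation φ (c • f) = c * variation φ f := by
  refine le_antisymm ?_ (mul_variation_le c f)
  obtain rfl | hc := eq_or_ne c 0
  · refine ciSup_le' fun g => ?_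
    have : (g : C₀(L, 𝕜)) = 0 := by ext x; simpa using g.2 x
    simp [this]
  · have := mul_variation_le (φ := φ) c⁻¹ (c • f)
    rwa [inv_smul_smul₀ hc, inv_mul_le_iff₀ (pos_iff_ne_zero.2 hc)] at this

lemma add_variation_le (f₁ f₂ : C_c(L, ℝ≥0)) :
    variation φ f₁ + variation φ f₂ ≤ variation φ (f₁ + f₂) := by
  have : Nonempty {g : C₀(L, 𝕜) // ∀ x, ‖g x‖₊ ≤ f₁ x} := ⟨0, by simp⟩
  have : Nonempty {g : C₀(L, 𝕜) // ∀ x, ‖g x‖₊ ≤ f₂ x} := ⟨0, by simp⟩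
  have coe_variation (f : C_c(L, ℝ≥0)) : (variation φ f : ℝ) =
      ⨆ g : {g : C₀(L, 𝕜) // ∀ x, ‖g x‖₊ ≤ f x}, ‖φ g‖ := NNReal.coe_iSup _
  rw [← NNReal.coe_le_coe, NNReal.coe_add, coe_variation f₁, coe_variation f₂]
  refine ciSup_add_ciSup_le fun g₁ g₂ => ?_
  obtain ⟨c₁, hc₁, hφ₁⟩ := RCLike.exists_norm_eq_mul_self (φ g₁)
  obtain ⟨c₂, hc₂, hφ₂⟩ := RCLike.exists_norm_eq_mul_self (φ g₂)
  have dominated (x : L) : ‖(c₁ • (g₁ : C₀(L, 𝕜)) + c₂ • (g₂ : C₀(L, 𝕜))) x‖₊ ≤ (f₁ + f₂) x := by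
    refine (norm_add_le _ _).trans ?_
    simpa [norm_smul, hc₁, hc₂] using NNReal.coe_le_coe.2 (add_le_add (g₁.2 x) (g₂.2 x))
  have aligned : φ (c₁ • (g₁ : C₀(L, 𝕜)) + c₂ • (g₂ : C₀(L, 𝕜))) =
      ((‖φ g₁‖ + ‖φ g₂‖ : ℝ) : 𝕜) := by
    simp [hφ₁, hφ₂]
  have bound := nnnorm_apply_le_variation (φ := φ) dominated
  rwa [aligned, ← NNReal.coe_le_coe, coe_nnnorm, RCLike.norm_ofReal,
    abs_of_nonneg (by positivity)] at bound

lemma exists_dominated_add_near {f₁ f₂ : C_c(L, ℝ≥0)} {g : C₀(L, 𝕜)}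
    (hg : ∀ x, ‖g x‖₊ ≤ (f₁ + f₂) x) {ε : ℝ≥0} (hε : 0 < ε) :
    ∃ g₁ g₂ : C₀(L, 𝕜), (∀ x, ‖g₁ x‖₊ ≤ f₁ x) ∧ (∀ x, ‖g₂ x‖₊ ≤ f₂ x) ∧
      ‖g - (g₁ + g₂)‖₊ ≤ ε := by
  -- Adding `ε` to the denominator keeps the weights `fᵢ / d` continuous where `f₁ + f₂` vanishes.
  let d (x : L) : ℝ≥0 := f₁ x + f₂ x + ε
  have d_pos (x : L) : 0 < d x := by positivity
  have g_le_d (x : L) : ‖g x‖ ≤ d x := (show ‖g x‖₊ ≤ d x from (hg x).trans le_self_add)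
  let weight (f : C_c(L, ℝ≥0)) : C_c(L, ℝ) :=
    { toFun := fun x => f x / d x
      continuous_toFun := by
        refine Continuous.div (by fun_prop) (by fun_prop) fun x => ?_
        exact_mod_cast (d_pos x).ne'
      hasCompactSupport' := (f.hasCompactSupport.comp_left (g := fun r : ℝ≥0 => (r : ℝ))
        NNReal.coe_zero).mul_right }
  have div_mul_le (c : ℝ≥0) (x : L) : ‖((c / d x : ℝ) : 𝕜) * g x‖ ≤ c := by
    rw [norm_mul, RCLike.norm_ofReal, abs_of_nonneg (by positivity)]
    exact (mul_le_mul_of_nonneg_left (g_le_d x) (by positivity)).trans_eq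
      (div_mul_cancel₀ _ (by exact_mod_cast (d_pos x).ne'))
  refine ⟨realCutoff 𝕜 (weight f₁) * g, realCutoff 𝕜 (weight f₂) * g,
    fun x => div_mul_le (f₁ x) x, fun x => div_mul_le (f₂ x) x,
    zeroAtInfty_norm_le ε.2 fun x => ?_⟩
  have weights_add : (1 : ℝ) - (f₁ x / d x + f₂ x / d x) = ε / d x := by
    have : (d x : ℝ) ≠ 0 := by exact_mod_cast (d_pos x).ne'
    simp only [d, NNReal.coe_add] at this ⊢
    field_simp
    ring
  have remainder : (g - (realCutoff 𝕜 (weight f₁) * g + realCutoff 𝕜 (weight f₂) * g)) x =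
      ((ε / d x : ℝ) : 𝕜) * g x := by
    rw [← weights_add]
    change g x - ((f₁ x / d x : ℝ) * g x + (f₂ x / d x : ℝ) * g x) = _
    push_cast
    ring
  rw [remainder]
  exact div_mul_le ε x

lemma variation_add_le (f₁ f₂ : C_c(L, ℝ≥0)) :
    variation φ (f₁ + f₂) ≤ variation φ f₁ + variation φ f₂ := by
  refine ciSup_le' fun g => le_of_forall_pos_le_add fun ε hε => ?_
  obtain ⟨δ, hδ, hφδ⟩ : ∃ δ : ℝ≥0, 0 < δ ∧ ‖φ‖₊ * δ < ε := exists_pos_mul_lt hε ‖φ‖₊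
  obtain ⟨g₁, g₂, hg₁, hg₂, h_near⟩ := exists_dominated_add_near g.2 hδ
  calc ‖φ g‖₊ = ‖φ g₁ + φ g₂ + φ (g - (g₁ + g₂))‖₊ := by simp
    _ ≤ ‖φ g₁‖₊ + ‖φ g₂‖₊ + ‖φ (g - (g₁ + g₂))‖₊ :=
      (nnnorm_add_le _ _).trans (add_le_add_left (nnnorm_add_le _ _) _)
    _ ≤ variation φ f₁ + variation φ f₂ + ε := by
      gcongr
      · exact nnnorm_apply_le_variation hg₁
      · exact nnnorm_apply_le_variation hg₂
      · exact (φ.le_opNNNorm _).trans ((mul_le_mul_right h_near _).trans hφδ.le)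

variable (φ) in
/-- `variation φ` as an `ℝ≥0`-linear functional. -/
def variationLinear : C_c(L, ℝ≥0) →ₗ[ℝ≥0] ℝ≥0 where
  toFun := variation φ
  map_add' f₁ f₂ := (variation_add_le f₁ f₂).antisymm (add_variation_le f₁ f₂)
  map_smul' := variation_smul

variable [T2Space L] [LocallyCompactSpace L] [MeasurableSpace L] [BorelSpace L]

variable (φ) in
/-- The total variation measure of a functional `φ` on `C₀(L, 𝕜)`: the Riesz measure of
`variation φ`. -/
def variationMeasure : Measure L := NNRealRMK.rieszMeasure (variationLinear φ)

instance : (variationMeasure φ).Regular :=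
  inferInstanceAs (NNRealRMK.rieszMeasure (variationLinear φ)).Regular

lemma variationMeasure_univ_le : variationMeasure φ Set.univ ≤ ‖φ‖₊ := by
  rw [isOpen_univ.measure_eq_iSup_isCompact]
  refine iSup₂_le fun K _ => iSup_le fun hK => ?_
  obtain ⟨u, hu_one, hu_mem⟩ := exists_compactlySupported_eqOn_one hK
  calc variationMeasure φ K = ∫⁻ _ in K, 1 ∂variationMeasure φ := by simp
    _ ≤ ∫⁻ x in K, u.nnrealPart x ∂variationMeasure φ := by
      refine setLIntegral_mono' hK.measurableSet fun x hx => ?_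
      simp [hu_one hx]
    _ ≤ ∫⁻ x, u.nnrealPart x ∂variationMeasure φ := setLIntegral_le_lintegral _ _
    _ = variation φ u.nnrealPart := NNRealRMK.lintegral_rieszMeasure _ _
    _ ≤ ‖φ‖₊ := by
      exact_mod_cast variation_le_nnnorm fun x => by simpa using (hu_mem x).2

instance : IsFiniteMeasure (variationMeasure φ) :=
  ⟨variationMeasure_univ_le.trans_lt ENNReal.coe_lt_top⟩

lemma norm_apply_le_integral_variationMeasure_of_hasCompactSupport {g : C₀(L, 𝕜)}
    (hg : HasCompactSupport g) : ‖φ g‖ ≤ ∫ x, ‖g x‖ ∂variationMeasure φ := by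
  let f : C_c(L, ℝ≥0) :=
    ⟨⟨fun x => ‖g x‖₊, (map_continuous g).nnnorm⟩, hg.comp_left (g := fun z => ‖z‖₊) nnnorm_zero⟩
  have integral_f : ∫ x, ‖g x‖ ∂variationMeasure φ = variation φ f :=
    NNRealRMK.integral_rieszMeasure (variationLinear φ) f
  rw [integral_f]
  exact nnnorm_apply_le_variation fun x => le_rfl

lemma norm_apply_le_integral_variationMeasure (g : C₀(L, 𝕜)) :
    ‖φ g‖ ≤ ∫ x, ‖g x‖ ∂variationMeasure φ := by
  refine le_of_forall_pos_le_add fun ε hε => ?_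
  obtain ⟨δ, hδ, hφδ⟩ : ∃ δ : ℝ, 0 < δ ∧ ‖φ‖ * δ < ε := exists_pos_mul_lt hε ‖φ‖
  obtain ⟨u, hu_mem, h_near⟩ := exists_norm_sub_realCutoff_mul_le g hδ
  have cutoff_le (x : L) : ‖(realCutoff 𝕜 u * g) x‖ ≤ ‖g x‖ := by
    simpa [abs_of_nonneg (hu_mem x).1] using
      mul_le_of_le_one_left (norm_nonneg (g x)) (hu_mem x).2
  calc ‖φ g‖ = ‖φ (realCutoff 𝕜 u * g) + φ (g - realCutoff 𝕜 u * g)‖ := by simp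
    _ ≤ ‖φ (realCutoff 𝕜 u * g)‖ + ‖φ (g - realCutoff 𝕜 u * g)‖ := norm_add_le _ _
    _ ≤ (∫ x, ‖(realCutoff 𝕜 u * g) x‖ ∂variationMeasure φ) + ε := by
      gcongr
      · exact norm_apply_le_integral_variationMeasure_of_hasCompactSupport
          (hasCompactSupport_realCutoff_mul u g)
      · exact (φ.le_opNorm _).trans
          ((mul_le_mul_of_nonneg_left h_near (norm_nonneg _)).trans hφδ.le)
    _ ≤ (∫ x, ‖g x‖ ∂variationMeasure φ) + ε := by
      gcongr
      · exact (zeroAtInfty_integrable _ _).norm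
      · exact (zeroAtInfty_integrable _ _).norm
      · exact cutoff_le

end Variation

lemma exists_strongDual_apply_eq_of_norm_le {𝕜 E F : Type*} [RCLike 𝕜] [AddCommGroup E]
    [Module 𝕜 E] [NormedAddCommGroup F] [NormedSpace 𝕜 F] {f : E →ₗ[𝕜] 𝕜} {e : E →ₗ[𝕜] F}
    {C : ℝ} (h : ∀ x, ‖f x‖ ≤ C * ‖e x‖) : ∃ ℓ : StrongDual 𝕜 F, ∀ x, ℓ (e x) = f x := by
  obtain ⟨ℓ, hℓ, -⟩ := exists_extension_norm_eq (LinearMap.range e) (f.compLeftInverse e)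
  exact ⟨ℓ, fun x => (hℓ ⟨e x, x, rfl⟩).trans
    (LinearMap.compLeftInverse_apply_of_bdd f e ⟨C, h⟩ x (e x) rfl)⟩

section Density

variable {𝕜 : Type*} [RCLike 𝕜]

lemma exists_integral_norm_le_mul_norm_Lp {α E : Type*} [MeasurableSpace α]
    [NormedAddCommGroup E] (μ : Measure α) [IsFiniteMeasure μ] {p : ENNReal} (hp : 1 ≤ p) :
    ∃ C : ℝ, ∀ f : Lp E p μ, ∫ x, ‖f x‖ ∂μ ≤ C * ‖f‖ := by
  let c : ENNReal := μ Set.univ ^ (1 / (1 : ENNReal).toReal - 1 / p.toReal)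
  have c_ne_top : c ≠ ⊤ := by
    refine ENNReal.rpow_ne_top_of_nonneg ?_ (measure_ne_top _ _)
    obtain rfl | hp_top := eq_or_ne p ⊤
    · simp
    · have : 1 ≤ p.toReal := by simpa using ENNReal.toReal_mono hp_top hp
      simpa using inv_le_one_of_one_le₀ this
  refine ⟨c.toReal, fun f => ?_⟩
  have hf : AEStronglyMeasurable f μ := Lp.aestronglyMeasurable f
  calc ∫ x, ‖f x‖ ∂μ = (eLpNorm f 1 μ).toReal := by
        rw [eLpNorm_one_eq_lintegral_enorm, integral_norm_eq_lintegral_enorm hf]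
    _ ≤ (eLpNorm f p μ * c).toReal := ENNReal.toReal_mono
        (ENNReal.mul_ne_top (Lp.eLpNorm_ne_top f) c_ne_top)
        (eLpNorm_le_eLpNorm_mul_rpow_measure_univ hp hf)
    _ = c.toReal * ‖f‖ := by rw [ENNReal.toReal_mul, Lp.norm_def, mul_comm]

variable {L : Type*} [TopologicalSpace L] [MeasurableSpace L]

lemma exists_integrable_density [BorelSpace L] {φ : C₀(L, 𝕜) →L[𝕜] 𝕜} {μ : Measure L}
    [IsFiniteMeasure μ] (hφ : ∀ g, ‖φ g‖ ≤ ∫ x, ‖g x‖ ∂μ) :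
    ∃ h : L → 𝕜, Integrable h μ ∧ ∀ g, φ g = ∫ x, g x * h x ∂μ := by
  -- As `μ` is finite, `φ` is also bounded for the `L²(μ)` norm, where Hilbert space duality
  -- represents it.
  let toL2 : C₀(L, 𝕜) →ₗ[𝕜] Lp 𝕜 2 μ :=
    { toFun := fun g => BoundedContinuousFunction.toLp 2 μ 𝕜 g.toBCF
      map_add' := fun _ _ => by rw [← map_add]; rfl
      map_smul' := fun _ _ => by rw [RingHom.id_apply, ← map_smul]; rfl }
  have coeFn_toL2 (g : C₀(L, 𝕜)) : toL2 g =ᵐ[μ] g :=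
    BoundedContinuousFunction.coeFn_toLp 2 μ 𝕜 g.toBCF
  obtain ⟨C, hC⟩ := exists_integral_norm_le_mul_norm_Lp (E := 𝕜) μ one_le_two
  have φ_le (g : C₀(L, 𝕜)) : ‖φ g‖ ≤ C * ‖toL2 g‖ := calc
    ‖φ g‖ ≤ ∫ x, ‖g x‖ ∂μ := hφ g
    _ = ∫ x, ‖toL2 g x‖ ∂μ := integral_congr_ae ((coeFn_toL2 g).fun_comp norm).symm
    _ ≤ C * ‖toL2 g‖ := hC _
  obtain ⟨ℓ, hℓ⟩ := exists_strongDual_apply_eq_of_norm_le (f := φ.toLinearMap) φ_le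
  let w : Lp 𝕜 2 μ := (InnerProductSpace.toDual 𝕜 (Lp 𝕜 2 μ)).symm ℓ
  have w_integrable : Integrable w μ := (Lp.memLp w).integrable one_le_two
  refine ⟨fun x => starRingEnd 𝕜 (w x), memLp_one_iff_integrable.1
    (memLp_one_iff_integrable.2 w_integrable).star, fun g => ?_⟩
  calc φ g = inner 𝕜 w (toL2 g) := by
        rw [InnerProductSpace.toDual_symm_apply, hℓ]; rfl
    _ = ∫ x, g x * starRingEnd 𝕜 (w x) ∂μ := by
      rw [L2.inner_def]
      refine integral_congr_ae ?_
      filter_upwards [coeFn_toL2 g] with x hx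
      rw [hx, RCLike.inner_apply]

variable [BorelSpace L] [T2Space L] [LocallyCompactSpace L]

lemma exists_common_density {ι : Type*} [Fintype ι] (φ : ι → C₀(L, 𝕜) →L[𝕜] 𝕜) :
    ∃ (μ : Measure L) (H : L → ι → 𝕜), IsFiniteMeasure μ ∧ μ.InnerRegular ∧ Integrable H μ ∧
      ∀ g k, φ k g = (∫ x, g x • H x ∂μ) k := by
  let μ : Measure L := Measure.sum fun k => variationMeasure (φ k)
  have dominated (k : ι) (g : C₀(L, 𝕜)) : ‖φ k g‖ ≤ ∫ x, ‖g x‖ ∂μ :=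
    (norm_apply_le_integral_variationMeasure g).trans <| integral_mono_measure
      (Measure.le_sum _ k) (.of_forall fun x => norm_nonneg _) (zeroAtInfty_integrable g μ).norm
  choose h h_integrable h_density using fun k => exists_integrable_density (dominated k)
  have H_integrable : Integrable (fun x k => h k x) μ := .of_eval h_integrable
  refine ⟨μ, fun x k => h k x, inferInstance, inferInstance, H_integrable, fun g k => ?_⟩
  rw [h_density, eval_integral (zeroAtInfty_integrable_smul H_integrable g).eval]
  rfl

end Density

lemma exists_simpleFunc_dist_lt {α E : Type*} [MeasurableSpace α] [PseudoMetricSpace E]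
    [MeasurableSpace E] [OpensMeasurableSpace E] [TopologicalSpace.SeparableSpace E] [Nonempty E]
    {f : α → E} (hf : Measurable f) {s : Set E} (hs : IsCompact s) (hfs : ∀ x, f x ∈ s)
    {ε : ℝ} (hε : 0 < ε) : ∃ q : SimpleFunc α E, ∀ x, dist (q x) (f x) < ε := by
  let e : ℕ → E := TopologicalSpace.denseSeq E
  have cover : s ⊆ ⋃ k, Metric.ball (e k) ε := fun y _ => by
    obtain ⟨k, hk⟩ := (TopologicalSpace.denseRange_denseSeq E).exists_dist_lt y hε
    exact Set.mem_iUnion_of_mem k hk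
  obtain ⟨t, ht⟩ := hs.elim_finite_subcover _ (fun k => Metric.isOpen_ball) cover
  refine ⟨(SimpleFunc.nearestPt e (t.sup id)).comp f hf, fun x => ?_⟩
  obtain ⟨k, hkt, hk⟩ := Set.mem_iUnion₂.1 (ht (hfs x))
  have nearest := SimpleFunc.edist_nearestPt_le e (f x) (Finset.le_sup (f := id) hkt)
  rw [edist_dist, edist_dist, ENNReal.ofReal_le_ofReal_iff dist_nonneg] at nearest
  exact nearest.trans_lt (Metric.mem_ball'.1 hk)

section Pieces

variable {L : Type*} [TopologicalSpace L] [MeasurableSpace L] [OpensMeasurableSpace L]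
  {μ : Measure L} [IsFiniteMeasure μ]

lemma exists_isCompact_subset_measureReal_sdiff_le [T2Space L]
    [μ.InnerRegularCompactLTTop] {A : Set L} (hA : MeasurableSet A) {ε : ℝ} (hε : 0 < ε) :
    ∃ K ⊆ A, IsCompact K ∧ μ.real (A \ K) ≤ ε ∧ (K.Nonempty → μ K ≠ 0) := by
  obtain ⟨K, hKA, hK, h_sdiff⟩ := hA.exists_isCompact_sdiff_lt (measure_ne_top μ A)
    (ENNReal.ofReal_pos.2 hε).ne'
  have h_sdiff : μ.real (A \ K) ≤ ε := ENNReal.toReal_le_of_le_ofReal hε.le h_sdiff.le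
  obtain hμK | hμK := eq_or_ne (μ K) 0
  · refine ⟨∅, A.empty_subset, isCompact_empty, ?_, fun h => absurd h Set.not_nonempty_empty⟩
    rwa [Set.sdiff_empty, measureReal_def, ← measure_sdiff_null hμK]
  · exact ⟨K, hKA, hK, h_sdiff, fun _ => hμK⟩

lemma exists_compact_pieces_of_simpleFunc [T2Space L] [μ.InnerRegularCompactLTTop] {β : Type*}
    (P : SimpleFunc L β) {ε : ℝ} (hε : 0 < ε) :
    ∃ (n : ℕ) (K : Fin n → Set L) (v : Fin n → β), (∀ j, IsCompact (K j)) ∧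
      (∀ j, μ (K j) ≠ 0) ∧ (∀ j, ∀ x ∈ K j, P x = v j) ∧ v.Injective ∧
      μ.real (⋃ j, K j)ᶜ ≤ ε := by
  classical
  obtain ⟨δ, hδ, h_card⟩ := exists_pos_mul_lt hε (P.range.card : ℝ)
  choose K hKP hK h_sdiff hμK using fun v =>
    exists_isCompact_subset_measureReal_sdiff_le (μ := μ) (P.measurableSet_fiber v) hδ
  let s : Finset β := {v ∈ P.range | (K v).Nonempty}
  refine ⟨s.card, fun j => K (s.equivFin.symm j), fun j => s.equivFin.symm j, fun j => hK _,
    fun j => hμK _ (Finset.mem_filter.1 (s.equivFin.symm j).2).2, fun j => hKP _,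
    Subtype.val_injective.comp s.equivFin.symm.injective, ?_⟩
  have compl_subset : (⋃ j, K (s.equivFin.symm j))ᶜ ⊆ ⋃ v ∈ P.range, P ⁻¹' {v} \ K v := by
    intro x hx
    refine Set.mem_biUnion (P.mem_range_self x) ⟨rfl, fun hxK => hx ?_⟩
    have hxs : P x ∈ s := Finset.mem_filter.2 ⟨P.mem_range_self x, x, hxK⟩
    exact Set.mem_iUnion.2 ⟨s.equivFin ⟨P x, hxs⟩, by simpa using hxK⟩
  calc μ.real (⋃ j, K (s.equivFin.symm j))ᶜ
      ≤ μ.real (⋃ v ∈ P.range, P ⁻¹' {v} \ K v) :=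
        measureReal_mono compl_subset (measure_ne_top _ _)
    _ ≤ ∑ v ∈ P.range, μ.real (P ⁻¹' {v} \ K v) := measureReal_biUnion_finset_le _ _
    _ ≤ ∑ _v ∈ P.range, δ := Finset.sum_le_sum fun v _ => h_sdiff v
    _ ≤ ε := by rw [Finset.sum_const, nsmul_eq_mul]; exact h_card.le

variable {F : Type*} [NormedAddCommGroup F] {H : L → F} {δ : ℝ}

lemma exists_simpleFunc_integral_norm_sub_le {α : Type*} [MeasurableSpace α] {μ : Measure α}
    {H : α → F} (hH : Integrable H μ) (hδ : 0 < δ) :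
    ∃ G : SimpleFunc α F, Integrable G μ ∧ ∫ x, ‖H x - G x‖ ∂μ ≤ δ := by
  obtain ⟨G, h_near, hG⟩ := (memLp_one_iff_integrable.2 hH).exists_simpleFunc_eLpNorm_sub_lt
    ENNReal.one_ne_top (ENNReal.ofReal_pos.2 hδ).ne'
  have hG := memLp_one_iff_integrable.1 hG
  refine ⟨G, hG, ?_⟩
  rw [eLpNorm_one_eq_lintegral_enorm] at h_near
  change ∫ x, ‖(H - ⇑G) x‖ ∂μ ≤ δ
  rw [integral_norm_eq_lintegral_enorm (hH.sub hG).aestronglyMeasurable]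
  exact ENNReal.toReal_le_of_le_ofReal hδ.le h_near.le

lemma integral_norm_sub_indicator_le {α : Type*} [MeasurableSpace α] {μ : Measure α}
    [IsFiniteMeasure μ] {H G : α → F} (hH : Integrable H μ) (hG : Integrable G μ) {U : Set α}
    (hU : MeasurableSet U) {M : ℝ} (hM : ∀ x, ‖G x‖ ≤ M) :
    ∫ x, ‖H x - U.indicator G x‖ ∂μ ≤ ∫ x, ‖H x - G x‖ ∂μ + M * μ.real Uᶜ := by
  have tail_integrable : Integrable (fun x => ‖Uᶜ.indicator G x‖) μ := (hG.indicator hU.compl).norm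
  have tail_le : ∫ x, ‖Uᶜ.indicator G x‖ ∂μ ≤ M * μ.real Uᶜ := calc
    ∫ x, ‖Uᶜ.indicator G x‖ ∂μ = ∫ x in Uᶜ, ‖G x‖ ∂μ := by
      simp only [norm_indicator_eq_indicator_norm, integral_indicator hU.compl]
    _ ≤ ∫ _x in Uᶜ, M ∂μ := setIntegral_mono hG.norm.integrableOn integrableOn_const hM
    _ = M * μ.real Uᶜ := by rw [setIntegral_const, smul_eq_mul, mul_comm]
  calc ∫ x, ‖H x - U.indicator G x‖ ∂μ
      ≤ ∫ x, (‖H x - G x‖ + ‖Uᶜ.indicator G x‖) ∂μ := by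
        refine integral_mono (hH.sub (hG.indicator hU)).norm
          ((hH.sub hG).norm.add tail_integrable) fun x => ?_
        have split : H x - U.indicator G x = H x - G x + Uᶜ.indicator G x := by
          rw [sub_add, Set.indicator_compl, Pi.sub_apply, sub_sub_cancel]
        exact split ▸ norm_add_le _ _
    _ = ∫ x, ‖H x - G x‖ ∂μ + ∫ x, ‖Uᶜ.indicator G x‖ ∂μ :=
        integral_add (hH.sub hG).norm tail_integrable
    _ ≤ ∫ x, ‖H x - G x‖ ∂μ + M * μ.real Uᶜ := add_le_add_right tail_le _

lemma sum_indicator_const_eq_indicator_iUnion {ι α M : Type*} [Fintype ι] [AddCommMonoid M]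
    {K : ι → Set α} (hK : Pairwise (Function.onFun Disjoint K)) {G : α → M} {c : ι → M}
    (hG : ∀ j, ∀ x ∈ K j, G x = c j) (x : α) :
    ∑ j, (K j).indicator (fun _ => c j) x = (⋃ j, K j).indicator G x := by
  have union := Finset.indicator_biUnion_apply Finset.univ K (f := G) (hK.set_pairwise _) x
  simp only [Finset.mem_univ, Set.iUnion_true] at union
  rw [union]
  refine Finset.sum_congr rfl fun j _ => ?_
  by_cases hx : x ∈ K j
  · simp [hx, hG j x hx]
  · simp [hx]

lemma exists_compact_step_approx [T2Space L] [μ.InnerRegularCompactLTTop]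
    (hH : Integrable H μ) {β : Type*} (q : SimpleFunc L β) (hδ : 0 < δ) :
    ∃ (n : ℕ) (K : Fin n → Set L) (c : Fin n → F) (b : Fin n → β), (∀ j, IsCompact (K j)) ∧
      (∀ j, μ (K j) ≠ 0) ∧ Pairwise (Function.onFun Disjoint K) ∧
      (∀ j, ∀ x ∈ K j, q x = b j) ∧
      ∫ x, ‖H x - ∑ j, (K j).indicator (fun _ => c j) x‖ ∂μ ≤ δ := by
  obtain ⟨G, hG, h_near⟩ := exists_simpleFunc_integral_norm_sub_le hH (half_pos hδ)
  obtain ⟨M, hM⟩ := G.exists_forall_norm_le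
  obtain ⟨ε, hε, hMε⟩ := exists_pos_mul_lt (half_pos hδ) |M|
  obtain ⟨n, K, v, hK, hμK, hKv, v_inj, h_compl⟩ :=
    exists_compact_pieces_of_simpleFunc (μ := μ) (G.pair q) hε
  have K_disj : Pairwise (Function.onFun Disjoint K) := fun i j hij =>
    Set.disjoint_left.2 fun x hxi hxj => hij (v_inj ((hKv i x hxi).symm.trans (hKv j x hxj)))
  refine ⟨n, K, fun j => (v j).1, fun j => (v j).2, hK, hμK, K_disj,
    fun j x hx => congrArg Prod.snd (hKv j x hx), ?_⟩
  set U := ⋃ j, K j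
  have hU : MeasurableSet U := .iUnion fun j => (hK j).measurableSet
  have step_eq (x : L) : ∑ j, (K j).indicator (fun _ => (v j).1) x = U.indicator G x :=
    sum_indicator_const_eq_indicator_iUnion K_disj
      (fun j x hx => congrArg Prod.fst (hKv j x hx)) x
  simp only [step_eq]
  calc ∫ x, ‖H x - U.indicator G x‖ ∂μ ≤ ∫ x, ‖H x - G x‖ ∂μ + |M| * μ.real Uᶜ :=
        integral_norm_sub_indicator_le hH hG hU fun x => (hM x).trans (le_abs_self M)
    _ ≤ δ / 2 + |M| * ε := by gcongr
    _ ≤ δ := by linarith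

variable {𝕜 : Type*} [RCLike 𝕜]

lemma norm_integral_smul_le_of_setIntegral_eq_zero [NormedSpace 𝕜 F]
    [NormedSpace ℝ F] [CompleteSpace F] (hH : Integrable H μ) {ι : Type*} [Fintype ι]
    {K : ι → Set L} (hK : ∀ j, MeasurableSet (K j)) {c : ι → F}
    (hδ : ∫ x, ‖H x - ∑ j, (K j).indicator (fun _ => c j) x‖ ∂μ ≤ δ) {g : C₀(L, 𝕜)}
    (hg : ∀ j, ∫ x in K j, g x ∂μ = 0) : ‖∫ x, g x • H x ∂μ‖ ≤ ‖g‖ * δ := by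
  let step (x : L) : F := ∑ j, (K j).indicator (fun _ => c j) x
  have indicator_integrable (j : ι) : Integrable ((K j).indicator fun _ => c j) μ :=
    (integrable_const _).indicator (hK j)
  have step_integrable : Integrable step μ :=
    integrable_finsetSum _ fun j _ => indicator_integrable j
  have step_orthogonal : ∫ x, g x • step x ∂μ = 0 := by
    simp only [step, Finset.smul_sum]
    rw [integral_finsetSum _ fun j _ => zeroAtInfty_integrable_smul (indicator_integrable j) g]
    refine Finset.sum_eq_zero fun j _ => ?_
    simp only [← Set.indicator_smul_apply, integral_indicator (hK j)]
    rw [integral_smul_const, hg, zero_smul]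
  calc ‖∫ x, g x • H x ∂μ‖ = ‖∫ x, g x • (H x - step x) ∂μ‖ := by
        simp only [smul_sub]
        rw [integral_sub (zeroAtInfty_integrable_smul hH g)
          (zeroAtInfty_integrable_smul step_integrable g), step_orthogonal, sub_zero]
    _ ≤ ∫ x, ‖g‖ * ‖H x - step x‖ ∂μ :=
        norm_integral_le_of_norm_le ((hH.sub step_integrable).norm.const_mul _) <|
          .of_forall fun x => (norm_smul_le _ _).trans <|
            mul_le_mul_of_nonneg_right (zeroAtInfty_norm_apply_le g x) (norm_nonneg _)
    _ ≤ ‖g‖ * δ := by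
        rw [integral_const_mul]
        exact mul_le_mul_of_nonneg_left hδ (norm_nonneg _)

lemma exists_compact_pieces [T2Space L] [μ.InnerRegularCompactLTTop] [NormedSpace 𝕜 F]
    [NormedSpace ℝ F] [CompleteSpace F] (hH : Integrable H μ) (f : C₀(L, 𝕜)) (hδ : 0 < δ) :
    ∃ (n : ℕ) (K : Fin n → Set L), (∀ j, IsCompact (K j)) ∧ (∀ j, μ (K j) ≠ 0) ∧
      Pairwise (Function.onFun Disjoint K) ∧
      (∀ j, ∀ x ∈ K j, ∀ y ∈ K j, dist (f x) (f y) ≤ δ) ∧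
      ∀ g : C₀(L, 𝕜), (∀ j, ∫ x in K j, g x ∂μ = 0) → ‖∫ x, g x • H x ∂μ‖ ≤ ‖g‖ * δ := by
  obtain ⟨q, hq⟩ := exists_simpleFunc_dist_lt (map_continuous f).measurable
    (isCompact_closedBall (0 : 𝕜) ‖f‖)
    (fun x => mem_closedBall_zero_iff.2 (zeroAtInfty_norm_apply_le f x)) (half_pos hδ)
  obtain ⟨n, K, c, b, hK, hμK, K_disj, hqb, h_approx⟩ := exists_compact_step_approx hH q hδ
  refine ⟨n, K, hK, hμK, K_disj, fun j x hx y hy => ?_, fun g hg =>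
    norm_integral_smul_le_of_setIntegral_eq_zero hH (fun j => (hK j).measurableSet) h_approx hg⟩
  have hqxy : q x = q y := (hqb j x hx).trans (hqb j y hy).symm
  linarith [dist_triangle_left (f x) (f y) (q x), hq x, hqxy ▸ hq y]

end Pieces

lemma setAverage_eq_of_eqOn_const {α E : Type*} [MeasurableSpace α] [NormedAddCommGroup E]
    [NormedSpace ℝ E] [CompleteSpace E] {μ : Measure α} [IsFiniteMeasure μ] {K : Set α}
    (hK : MeasurableSet K) (hμK : μ K ≠ 0) {g : α → E} {c : E} (hg : ∀ x ∈ K, g x = c) :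
    ⨍ x in K, g x ∂μ = c := by
  rw [setAverage_congr_fun hK (.of_forall hg), setAverage_const hμK (measure_ne_top μ K)]

section SetAverage

variable {𝕜 : Type*} [RCLike 𝕜] {L : Type*} [TopologicalSpace L] [MeasurableSpace L]
  {μ : Measure L} [IsFiniteMeasure μ] {K : Set L}

lemma norm_setAverage_le_norm (g : C₀(L, 𝕜)) : ‖⨍ x in K, g x ∂μ‖ ≤ ‖g‖ := by
  rw [setAverage_eq, norm_smul, norm_inv, Real.norm_of_nonneg measureReal_nonneg]
  refine inv_mul_le_of_le_mul₀ measureReal_nonneg (norm_nonneg g) ?_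
  rw [mul_comm]
  exact norm_setIntegral_le_of_norm_le_const (measure_lt_top μ K)
    fun x _ => zeroAtInfty_norm_apply_le g x

variable [OpensMeasurableSpace L]

lemma dist_setAverage_le (hK : MeasurableSet K) (hμK : μ K ≠ 0) {g : C₀(L, 𝕜)} {c : 𝕜}
    {δ : ℝ} (hg : ∀ x ∈ K, dist (g x) c ≤ δ) : dist (⨍ x in K, g x ∂μ) c ≤ δ :=
  (convex_closedBall c δ).set_average_mem Metric.isClosed_closedBall hμK (measure_ne_top μ K)
    (ae_restrict_of_forall_mem hK hg) (zeroAtInfty_integrable g μ).integrableOn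

variable (μ K) in
/-- Averaging over `K` as a functional on `C₀(L, 𝕜)`. It is zero when `μ K = 0`. -/
def setAverageCLM (𝕜 : Type*) [RCLike 𝕜] : C₀(L, 𝕜) →L[𝕜] 𝕜 :=
  LinearMap.mkContinuous
    { toFun := fun g => ⨍ x in K, g x ∂μ
      map_add' := fun f g => by
        simp only [setAverage_eq, ZeroAtInftyContinuousMap.add_apply]
        rw [integral_add (zeroAtInfty_integrable f _) (zeroAtInfty_integrable g _), smul_add]
      map_smul' := fun c g => by
        simp only [setAverage_eq, ZeroAtInftyContinuousMap.smul_apply, integral_smul,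
          RingHom.id_apply]
        rw [smul_comm] }
    1 fun g => by simpa using norm_setAverage_le_norm g

lemma norm_setAverageCLM_apply_le (g : C₀(L, 𝕜)) : ‖setAverageCLM μ K 𝕜 g‖ ≤ ‖g‖ :=
  norm_setAverage_le_norm g

lemma setIntegral_eq_zero_of_setAverageCLM_eq_zero (hμK : μ K ≠ 0) {g : C₀(L, 𝕜)}
    (hg : setAverageCLM μ K 𝕜 g = 0) : ∫ x in K, g x ∂μ = 0 := by
  have hg : ⨍ x in K, g x ∂μ = 0 := hg
  rw [setAverage_eq, smul_eq_zero, inv_eq_zero] at hg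
  exact hg.resolve_left ((measureReal_ne_zero_iff (measure_ne_top μ K)).2 hμK)

end SetAverage

section Bumps

variable {𝕜 : Type*} [RCLike 𝕜] {L : Type*} [TopologicalSpace L] {ι : Type*} [Fintype ι]

/-- Bump functions separating the sets `K j`: nonnegative functions with sum at most one, such that
`ψ j` vanishes outside of `U j`, and is one on `K j` while all the others vanish there. -/
structure IsBumpFamily [DecidableEq ι] (K U : ι → Set L) (ψ : ι → C_c(L, ℝ)) : Prop where
  nonneg (j : ι) (x : L) : 0 ≤ ψ j x
  sum_le_one (x : L) : ∑ j, ψ j x ≤ 1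
  eq_single (j : ι) (x : L) (hx : x ∈ K j) : (fun i => ψ i x) = Pi.single j 1
  mem_of_ne_zero (j : ι) (x : L) (hx : ψ j x ≠ 0) : x ∈ U j

lemma exists_isBumpFamily [DecidableEq ι] [T2Space L] [LocallyCompactSpace L] {K U : ι → Set L}
    (hK : ∀ j, IsCompact (K j)) (K_disj : Pairwise (Function.onFun Disjoint K))
    (hU : ∀ j, IsOpen (U j)) (hKU : ∀ j, K j ⊆ U j) :
    ∃ ψ : ι → C_c(L, ℝ), IsBumpFamily K U ψ := by
  let V (j : ι) : Set L := U j \ ⋃ i ≠ j, K i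
  have V_open (j : ι) : IsOpen (V j) :=
    (hU j).sdiff (isClosed_iUnion_of_finite fun i =>
      isClosed_iUnion_of_finite fun _ => (hK i).isClosed)
  have K_subset_V (j : ι) : K j ⊆ V j := fun x hx =>
    ⟨hKU j hx, by simpa using fun i hij hxi => (K_disj hij).ne_of_mem hxi hx rfl⟩
  obtain ⟨ψ, ψ_sub, ψ_supp⟩ := PartitionOfUnity.exists_isSubordinate_of_locallyFinite_t2space
    (isCompact_iUnion hK) V V_open (locallyFinite_of_finite _) (Set.iUnion_mono K_subset_V)
  have mem_V {j : ι} {x : L} (hx : ψ j x ≠ 0) : x ∈ V j := ψ_sub j (subset_tsupport _ hx)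
  have eq_zero {i j : ι} (hij : i ≠ j) {x : L} (hx : x ∈ K j) : ψ i x = 0 := by
    by_contra hψ
    exact (mem_V hψ).2 (Set.mem_biUnion hij.symm hx)
  refine ⟨fun j => ⟨ψ j, ψ_supp j⟩, fun j x => ψ.nonneg j x,
    fun x => (finsum_eq_sum_of_fintype fun j => ψ j x) ▸ ψ.sum_le_one x, fun j x hx => ?_,
    fun j x hx => (mem_V hx).1⟩
  have sum_eq : ∑ i, ψ i x = 1 :=
    (finsum_eq_sum_of_fintype _).symm.trans (ψ.sum_eq_one (Set.mem_iUnion_of_mem j hx))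
  rw [Fintype.sum_eq_single j fun i hij => eq_zero hij hx] at sum_eq
  funext i
  obtain rfl | hij := eq_or_ne i j
  · simpa using sum_eq
  · simpa [hij] using eq_zero hij hx

variable (𝕜) in
/-- The operator sending the unit vectors of `ι → 𝕜` to the functions `ψ j`. -/
def interpolation (ψ : ι → C_c(L, ℝ)) : (ι → 𝕜) →L[𝕜] C₀(L, 𝕜) :=
  ∑ j, (ContinuousLinearMap.proj (R := 𝕜) j).smulRight (realCutoff 𝕜 (ψ j))

/-- The modification of `f` which moves its values towards `a j` near the `j`-th bump, and
which is equal to `a j` wherever `ψ j = 1` and the other bumps vanish. -/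
def blend (ψ : ι → C_c(L, ℝ)) (f : C₀(L, 𝕜)) (a : ι → 𝕜) : C₀(L, 𝕜) :=
  f - (∑ j, realCutoff 𝕜 (ψ j)) * f + interpolation 𝕜 ψ a

variable {ψ : ι → C_c(L, ℝ)} {f : C₀(L, 𝕜)} {a : ι → 𝕜}

lemma blend_zero : blend ψ 0 a = interpolation 𝕜 ψ a := by
  simp [blend]

lemma blend_apply (x : L) :
    blend ψ f a x = ((1 - ∑ j, ψ j x : ℝ) : 𝕜) * f x + ∑ j, (ψ j x : 𝕜) * a j := by
  have eval_sum (g : ι → C₀(L, 𝕜)) : (∑ j, g j) x = ∑ j, g j x :=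
    map_sum (⟨⟨fun g => g x, rfl⟩, fun _ _ => rfl⟩ : C₀(L, 𝕜) →+ 𝕜) g _
  simp only [blend, interpolation, ZeroAtInftyContinuousMap.add_apply, eval_sum,
    ZeroAtInftyContinuousMap.sub_apply, ZeroAtInftyContinuousMap.mul_apply, realCutoff_apply,
    ContinuousLinearMap.smulRight_apply, ContinuousLinearMap.proj_apply, sum_apply,
    ZeroAtInftyContinuousMap.smul_apply, smul_eq_mul]
  push_cast
  simp only [sub_mul, one_mul, mul_comm (a _)]

lemma blend_sub_apply (x : L) :
    (blend ψ f a - f) x = ∑ j, (ψ j x : 𝕜) * (a j - f x) := by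
  rw [ZeroAtInftyContinuousMap.sub_apply, blend_apply]
  simp only [mul_sub, Finset.sum_sub_distrib, ← Finset.sum_mul]
  push_cast
  ring

lemma norm_sum_ofReal_mul_le {w : ι → ℝ} (hw : ∀ j, 0 ≤ w j) {z : ι → 𝕜} {r : ℝ}
    (hz : ∀ j, w j ≠ 0 → ‖z j‖ ≤ r) : ‖∑ j, (w j : 𝕜) * z j‖ ≤ (∑ j, w j) * r := by
  rw [Finset.sum_mul]
  refine norm_sum_le_of_le _ fun j _ => ?_
  rw [norm_mul, RCLike.norm_ofReal, abs_of_nonneg (hw j)]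
  obtain hwj | hwj := eq_or_ne (w j) 0
  · simp [hwj]
  · exact mul_le_mul_of_nonneg_left (hz j hwj) (hw j)

namespace IsBumpFamily

variable [DecidableEq ι] {K U : ι → Set L}

lemma blend_apply_of_mem (hψ : IsBumpFamily K U ψ) {j : ι} {x : L} (hx : x ∈ K j) :
    blend ψ f a x = a j := by
  have values (i : ι) : ψ i x = Pi.single (M := fun _ => ℝ) j 1 i :=
    congrFun (hψ.eq_single j x hx) i
  simp [blend_apply, values, Pi.single_apply]

lemma norm_blend_le (hψ : IsBumpFamily K U ψ) {C : ℝ} (hf : ‖f‖ ≤ C) (ha : ‖a‖ ≤ C) :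
    ‖blend ψ f a‖ ≤ C := by
  refine zeroAtInfty_norm_le ((norm_nonneg f).trans hf) fun x => ?_
  have rest_nonneg : 0 ≤ 1 - ∑ j, ψ j x := sub_nonneg.2 (hψ.sum_le_one x)
  rw [blend_apply]
  calc ‖((1 - ∑ j, ψ j x : ℝ) : 𝕜) * f x + ∑ j, (ψ j x : 𝕜) * a j‖
      ≤ (1 - ∑ j, ψ j x) * C + (∑ j, ψ j x) * C := by
        refine norm_add_le_of_le ?_ (norm_sum_ofReal_mul_le (fun j => hψ.nonneg j x)
          fun j _ => (norm_le_pi_norm a j).trans ha)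
        rw [norm_mul, RCLike.norm_ofReal, abs_of_nonneg rest_nonneg]
        exact mul_le_mul_of_nonneg_left ((zeroAtInfty_norm_apply_le f x).trans hf) rest_nonneg
    _ = C := by ring

lemma norm_blend_sub_le (hψ : IsBumpFamily K U ψ) {r : ℝ} (hr : 0 ≤ r)
    (ha : ∀ j, ∀ x ∈ U j, ‖a j - f x‖ ≤ r) : ‖blend ψ f a - f‖ ≤ r := by
  refine zeroAtInfty_norm_le hr fun x => ?_
  rw [blend_sub_apply]
  exact (norm_sum_ofReal_mul_le (fun j => hψ.nonneg j x)
    fun j hj => ha j x (hψ.mem_of_ne_zero j x hj)).trans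
    (mul_le_of_le_one_left hr (hψ.sum_le_one x))

lemma norm_interpolation_apply_le (hψ : IsBumpFamily K U ψ) (a : ι → 𝕜) :
    ‖interpolation 𝕜 ψ a‖ ≤ ‖a‖ :=
  blend_zero (ψ := ψ) (a := a) ▸ hψ.norm_blend_le (norm_zero.trans_le (norm_nonneg a)) le_rfl

end IsBumpFamily

end Bumps

section Factorization

variable {𝕜 : Type*} [RCLike 𝕜] {X Y : Type*} [NormedAddCommGroup X] [NormedSpace 𝕜 X]
  [NormedAddCommGroup Y] [NormedSpace 𝕜 Y] {Z : Type*} [NormedAddCommGroup Z] [NormedSpace 𝕜 Z]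

/-- The point `x` can be moved along with its image under `P : X → Z`: every point `a` of the
unit ball of `Z` lifts to a point of the unit ball of `X` whose distance to `x` exceeds that of
`a` to `P x` by at most `δ`. -/
def LiftsNear (P : X →L[𝕜] Z) (x : X) (δ : ℝ) : Prop :=
  ∀ a : Z, ‖a‖ ≤ 1 → ∃ x' : X, ‖x'‖ ≤ 1 ∧ P x' = a ∧ ‖x' - x‖ ≤ ‖a - P x‖ + δ

variable (Z) in
/-- Near the point `x`, the operator `T` behaves up to `δ` like an operator on `Z`: it almost
factors through a contraction `P : X → Z`, along which `x` lifts. -/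
def FactorsApproximately (T : X →L[𝕜] Y) (x : X) (δ : ℝ) : Prop :=
  ∃ (P : X →L[𝕜] Z) (i : Z →L[𝕜] X),
    ‖P‖ ≤ 1 ∧ ‖i‖ ≤ 1 ∧ ‖T - T ∘L i ∘L P‖ ≤ δ ∧ LiftsNear P x δ

lemma exists_finset_strongDual_norm_le_add {Q : Set Y} (hQ : TotallyBounded Q) {δ : ℝ}
    (hδ : 0 < δ) :
    ∃ t : Finset (StrongDual 𝕜 Y), ∀ y ∈ Q, ∀ c, (∀ g ∈ t, ‖g y‖ ≤ c) → ‖y‖ ≤ c + δ := by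
  classical
  obtain ⟨s, -, hs, Q_subset⟩ := Metric.finite_approx_of_totallyBounded hQ (δ / 2) (half_pos hδ)
  choose norming norming_le norming_apply using exists_dual_vector'' 𝕜 (E := Y)
  refine ⟨hs.toFinset.image norming, fun y hy c hc => ?_⟩
  obtain ⟨z, hz, hyz⟩ := Set.mem_iUnion₂.1 (Q_subset hy)
  have hyz : ‖y - z‖ < δ / 2 := mem_ball_iff_norm.1 hyz
  have hcy : ‖norming z y‖ ≤ c :=
    hc _ (Finset.mem_image_of_mem _ (hs.mem_toFinset.2 hz))
  have norm_z : ‖z‖ ≤ c + δ / 2 := calc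
    ‖z‖ = ‖norming z z‖ := by rw [norming_apply, RCLike.norm_ofReal, abs_norm]
    _ = ‖norming z y - norming z (y - z)‖ := by rw [← map_sub, sub_sub_cancel]
    _ ≤ ‖norming z y‖ + ‖norming z (y - z)‖ := norm_sub_le _ _
    _ ≤ c + δ / 2 := add_le_add hcy <|
      ((norming z).le_of_opNorm_le (norming_le z) _).trans (by linarith)
  linarith [norm_le_norm_sub_add y z]

variable {L : Type*} [TopologicalSpace L] [T2Space L] [LocallyCompactSpace L]

lemma exists_projection_interpolation [MeasurableSpace L] [OpensMeasurableSpace L]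
    {μ : Measure L} [IsFiniteMeasure μ] [μ.InnerRegularCompactLTTop] {F : Type*}
    [NormedAddCommGroup F] [NormedSpace 𝕜 F] [NormedSpace ℝ F] [CompleteSpace F] {H : L → F}
    (hH : Integrable H μ) {f : C₀(L, 𝕜)} (hf : ‖f‖ ≤ 1) {δ : ℝ} (hδ : 0 < δ) :
    ∃ (n : ℕ) (P : C₀(L, 𝕜) →L[𝕜] Fin n → 𝕜) (i : (Fin n → 𝕜) →L[𝕜] C₀(L, 𝕜)),
      (∀ g, ‖P g‖ ≤ ‖g‖) ∧ (∀ a, ‖i a‖ ≤ ‖a‖) ∧ (∀ a, P (i a) = a) ∧ LiftsNear P f (2 * δ) ∧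
      ∀ g, P g = 0 → ‖∫ x, g x • H x ∂μ‖ ≤ ‖g‖ * δ := by
  obtain ⟨n, K, hK, hμK, K_disj, hfK, h_orth⟩ := exists_compact_pieces hH f hδ
  let P : C₀(L, 𝕜) →L[𝕜] Fin n → 𝕜 := .pi fun j => setAverageCLM μ (K j) 𝕜
  let U (j : Fin n) : Set L := {x | dist (P f j) (f x) < 2 * δ}
  have K_subset_U (j : Fin n) : K j ⊆ U j := fun x hx =>
    (dist_setAverage_le (hK j).measurableSet (hμK j) fun y hy => hfK j y hy x hx).trans_lt
      (by linarith)
  obtain ⟨ψ, hψ⟩ := exists_isBumpFamily hK K_disj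
    (fun j => isOpen_lt (continuous_const.dist (map_continuous f)) continuous_const) K_subset_U
  have P_blend (g : C₀(L, 𝕜)) (a : Fin n → 𝕜) : P (blend ψ g a) = a := funext fun j =>
    setAverage_eq_of_eqOn_const (hK j).measurableSet (hμK j) fun x => hψ.blend_apply_of_mem
  refine ⟨n, P, interpolation 𝕜 ψ, fun g => ?_, hψ.norm_interpolation_apply_le,
    fun a => blend_zero (ψ := ψ) (a := a) ▸ P_blend 0 a,
    fun a ha => ⟨blend ψ f a, hψ.norm_blend_le hf ha, P_blend f a, ?_⟩,
    fun g hg => h_orth g fun j =>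
      setIntegral_eq_zero_of_setAverageCLM_eq_zero (hμK j) (congrFun hg j)⟩
  · exact (pi_norm_le_iff_of_nonneg (norm_nonneg g)).2 fun j => norm_setAverageCLM_apply_le g
  · refine hψ.norm_blend_sub_le (by positivity) fun j x hx => ?_
    calc ‖a j - f x‖ ≤ ‖a j - P f j‖ + ‖P f j - f x‖ := norm_sub_le_norm_sub_add_norm_sub _ _ _
      _ ≤ ‖a - P f‖ + 2 * δ :=
        add_le_add (norm_le_pi_norm (a - P f) j) (dist_eq_norm (P f j) (f x) ▸ hx.le)

lemma exists_factorsApproximately_fin {T : C₀(L, 𝕜) →L[𝕜] Y} (hT : IsCompactOperator T)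
    {f : C₀(L, 𝕜)} (hf : ‖f‖ ≤ 1) {δ : ℝ} (hδ : 0 < δ) :
    ∃ n : ℕ, FactorsApproximately (Fin n → 𝕜) T f δ := by
  borelize L
  obtain ⟨Q, hQ, image_subset⟩ := hT.image_closedBall_subset_compact 2
  obtain ⟨t, ht⟩ := exists_finset_strongDual_norm_le_add (𝕜 := 𝕜) hQ.totallyBounded (half_pos hδ)
  obtain ⟨μ, H, _, _, hH, h_density⟩ :=
    exists_common_density fun k : t => (k : StrongDual 𝕜 Y) ∘L T
  obtain ⟨n, P, i, hP, hi, hPi, h_lift, h_orth⟩ :=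
    exists_projection_interpolation hH hf (δ := δ / 4) (by positivity)
  refine ⟨n, P, i, P.opNorm_le_bound zero_le_one (by simpa using hP),
    i.opNorm_le_bound zero_le_one (by simpa using hi), ?_, fun a ha => ?_⟩
  · refine ContinuousLinearMap.opNorm_le_of_unit_norm hδ.le fun g hg => ?_
    have norm_le_two : ‖g - i (P g)‖ ≤ 2 := calc
      ‖g - i (P g)‖ ≤ ‖g‖ + ‖i (P g)‖ := norm_sub_le _ _
      _ ≤ ‖g‖ + ‖g‖ := add_le_add_right ((hi _).trans (hP g)) _
      _ = 2 := by rw [hg]; norm_num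
    have functional_le (k : StrongDual 𝕜 Y) (hk : k ∈ t) : ‖k (T (g - i (P g)))‖ ≤ δ / 2 := calc
      ‖k (T (g - i (P g)))‖ = ‖(∫ x, (g - i (P g)) x • H x ∂μ) ⟨k, hk⟩‖ :=
        congrArg norm (h_density (g - i (P g)) ⟨k, hk⟩)
      _ ≤ ‖∫ x, (g - i (P g)) x • H x ∂μ‖ := norm_le_pi_norm _ _
      _ ≤ ‖g - i (P g)‖ * (δ / 4) := h_orth _ (by rw [map_sub, hPi, sub_self])
      _ ≤ δ / 2 := by nlinarith
    have image_le : ‖T (g - i (P g))‖ ≤ δ / 2 + δ / 2 :=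
      ht _ (image_subset ⟨_, mem_closedBall_zero_iff.2 norm_le_two, rfl⟩) _ functional_le
    simpa using image_le
  · obtain ⟨x, hx, hPx, hxf⟩ := h_lift a ha
    exact ⟨x, hx, hPx, by linarith⟩

end Factorization

section Transfer

variable {𝕜 : Type*} [RCLike 𝕜] {X Y Z : Type*} [NormedAddCommGroup X] [NormedSpace 𝕜 X]
  [NormedAddCommGroup Y] [NormedSpace 𝕜 Y] [NormedAddCommGroup Z] [NormedSpace 𝕜 Z]

/-- The conclusion of the Bishop–Phelps–Bollobás property: some compact operator of norm one
within `ε` of `T` attains its norm at a unit vector within `ε` of `x₀`. -/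
def HasAttainingNear (T : X →L[𝕜] Y) (x₀ : X) (ε : ℝ) : Prop :=
  ∃ S : X →L[𝕜] Y, ∃ x₁ : X, IsCompactOperator S ∧ ‖S‖ = 1 ∧ ‖x₁‖ = 1 ∧
    ‖S x₁‖ = 1 ∧ ‖x₀ - x₁‖ < ε ∧ ‖S - T‖ < ε

lemma HasAttainingNear.mono {T : X →L[𝕜] Y} {x₀ : X} {ε ε' : ℝ} (h : HasAttainingNear T x₀ ε)
    (hε : ε ≤ ε') : HasAttainingNear T x₀ ε' := by
  obtain ⟨S, x₁, hS, norm_S, norm_x₁, attains, hx, hST⟩ := h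
  exact ⟨S, x₁, hS, norm_S, norm_x₁, attains, hx.trans_le hε, hST.trans_le hε⟩

lemma hasAttainingNear_of_norm_le {S T : X →L[𝕜] Y} {x₀ x₁ : X} {ε : ℝ}
    (hS : IsCompactOperator S) (norm_S : ‖S‖ ≤ 1) (norm_x₁ : ‖x₁‖ ≤ 1) (attains : ‖S x₁‖ = 1)
    (hx : ‖x₀ - x₁‖ < ε) (hST : ‖S - T‖ < ε) : HasAttainingNear T x₀ ε := by
  have le_mul : 1 ≤ ‖S‖ * ‖x₁‖ := attains ▸ S.le_opNorm x₁
  exact ⟨S, x₁, hS, by nlinarith [norm_nonneg S], by nlinarith [norm_nonneg x₁], attains, hx, hST⟩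

lemma norm_comp_le_of_norm_le_one (S : Z →L[𝕜] Y) {P : X →L[𝕜] Z} (hP : ‖P‖ ≤ 1) :
    ‖S ∘L P‖ ≤ ‖S‖ :=
  (S.opNorm_comp_le P).trans (mul_le_of_le_one_right (norm_nonneg S) hP)

lemma norm_apply_eq_one_of_add_smul {S : X →L[𝕜] Y} (hS : ‖S‖ ≤ 1) {u v : X} (hu : ‖u‖ ≤ 1)
    (huv : ‖u + (2 : 𝕜) • v‖ ≤ 1) (attains : ‖S (u + v)‖ = 1) : ‖S u‖ = 1 := by
  have norm_le {x : X} (hx : ‖x‖ ≤ 1) : ‖S x‖ ≤ 1 := (S.le_of_opNorm_le hS x).trans (by simpa)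
  refine (norm_le hu).antisymm ?_
  have midpoint : (2 : 𝕜) • S (u + v) = S u + S (u + (2 : 𝕜) • v) := by
    simp only [map_add, two_smul]
    abel
  have triangle := norm_add_le (S u) (S (u + (2 : 𝕜) • v))
  rw [← midpoint, norm_smul, attains, RCLike.norm_two] at triangle
  linarith [norm_le huv]

lemma norm_inv_norm_smul_sub {x : X} (hx : x ≠ 0) : ‖(‖x‖⁻¹ : 𝕜) • x - x‖ = |1 - ‖x‖| := by
  have : (‖x‖⁻¹ : 𝕜) • x - x = ((‖x‖⁻¹ - 1 : ℝ) : 𝕜) • x := by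
    push_cast
    rw [sub_smul, one_smul]
  calc ‖(‖x‖⁻¹ : 𝕜) • x - x‖
      = |(‖x‖⁻¹ - 1) * ‖x‖| := by rw [this, norm_smul, RCLike.norm_ofReal, abs_mul, abs_norm]
    _ = |1 - ‖x‖| := by rw [sub_mul, one_mul, inv_mul_cancel₀ (norm_ne_zero_iff.2 hx)]

lemma BPBpCompactWith.hasAttainingNear_of_norm_le {η : ℝ → ℝ} (h : BPBpCompactWith 𝕜 X Y η)
    {ε θ : ℝ} (hε : 0 < ε) (hθη : θ ≤ η ε) (hθ : θ ≤ 1) {T : X →L[𝕜] Y}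
    (hT : IsCompactOperator T) (norm_T : ‖T‖ ≤ 1) {x₀ : X} (norm_x₀ : ‖x₀‖ ≤ 1)
    (hx₀ : 1 - θ < ‖T x₀‖) : HasAttainingNear T x₀ (ε + θ) := by
  have Tx₀_le_T : ‖T x₀‖ ≤ ‖T‖ := T.unit_le_opNorm x₀ norm_x₀
  have Tx₀_le_x₀ : ‖T x₀‖ ≤ ‖x₀‖ := (T.le_of_opNorm_le norm_T x₀).trans_eq (one_mul _)
  have T_ne : T ≠ 0 := norm_pos_iff.1 (by linarith)
  have x₀_ne : x₀ ≠ 0 := norm_pos_iff.1 (by linarith)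
  let T' : X →L[𝕜] Y := (‖T‖⁻¹ : 𝕜) • T
  let x' : X := (‖x₀‖⁻¹ : 𝕜) • x₀
  have T'_near : ‖T' - T‖ < θ := by
    rw [norm_inv_norm_smul_sub T_ne, abs_of_nonneg] <;> linarith
  have x'_near : ‖x' - x₀‖ < θ := by
    rw [norm_inv_norm_smul_sub x₀_ne, abs_of_nonneg] <;> linarith
  have norm_T'x' : ‖T x₀‖ ≤ ‖T' x'‖ := by
    have : ‖T' x'‖ = ‖x₀‖⁻¹ * (‖T‖⁻¹ * ‖T x₀‖) := by simp [T', x', norm_smul]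
    rw [this]
    have inv_T : 1 ≤ ‖T‖⁻¹ := (one_le_inv₀ (norm_pos_iff.2 T_ne)).2 norm_T
    have inv_x₀ : 1 ≤ ‖x₀‖⁻¹ := (one_le_inv₀ (norm_pos_iff.2 x₀_ne)).2 norm_x₀
    exact (le_mul_of_one_le_left (norm_nonneg _) inv_T).trans
      (le_mul_of_one_le_left (by positivity) inv_x₀)
  obtain ⟨S, x₁, hS, norm_S, norm_x₁, attains, hx, hST⟩ := (h ε hε).2 T' (hT.smul _)
    (norm_smul_inv_norm T_ne) x' (norm_smul_inv_norm x₀_ne) (by linarith)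
  refine ⟨S, x₁, hS, norm_S, norm_x₁, attains, ?_, ?_⟩
  · linarith [norm_sub_le_norm_sub_add_norm_sub x₀ x' x₁, norm_sub_rev x' x₀]
  · linarith [norm_sub_le_norm_sub_add_norm_sub S T' T]

lemma HasAttainingNear.of_liftsNear {T : X →L[𝕜] Y} {x₀ : X} {P : X →L[𝕜] Z} {i : Z →L[𝕜] X}
    {ε δ : ℝ} (h : HasAttainingNear (T ∘L i) (P x₀) ε) (hP : ‖P‖ ≤ 1)
    (hTiP : ‖T - T ∘L i ∘L P‖ ≤ δ) (h_lift : LiftsNear P x₀ δ) :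
    HasAttainingNear T x₀ (ε + δ) := by
  obtain ⟨S, a, hS, norm_S, norm_a, attains, ha, hST⟩ := h
  obtain ⟨x₁, norm_x₁, rfl, hx₁⟩ := h_lift a norm_a.le
  refine hasAttainingNear_of_norm_le (hS.comp_clm P)
    ((norm_comp_le_of_norm_le_one S hP).trans norm_S.le) norm_x₁ attains ?_ ?_
  · rw [norm_sub_rev]
    exact hx₁.trans_lt (by linarith [norm_sub_rev (P x₁) (P x₀)])
  · have SP_near : ‖S ∘L P - (T ∘L i) ∘L P‖ < ε := by
      rw [← ContinuousLinearMap.sub_comp]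
      exact (norm_comp_le_of_norm_le_one _ hP).trans_lt hST
    calc ‖S ∘L P - T‖
        ≤ ‖S ∘L P - (T ∘L i) ∘L P‖ + ‖(T ∘L i) ∘L P - T‖ :=
          norm_sub_le_norm_sub_add_norm_sub _ _ _
      _ < ε + δ := add_lt_add_of_lt_of_le SP_near (norm_sub_rev T _ ▸ hTiP)

lemma FactorsApproximately.hasAttainingNear {η : ℝ → ℝ} (h : BPBpCompactWith 𝕜 Z Y η)
    {ε θ : ℝ} (hε : 0 < ε) (hθη : 2 * θ ≤ η ε) (hθ : 2 * θ ≤ 1) {T : X →L[𝕜] Y}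
    (hT : IsCompactOperator T) (norm_T : ‖T‖ ≤ 1) {x₀ : X} (norm_x₀ : ‖x₀‖ ≤ 1)
    (hx₀ : 1 - θ < ‖T x₀‖) (h_factor : FactorsApproximately Z T x₀ θ) :
    HasAttainingNear T x₀ (ε + 3 * θ) := by
  obtain ⟨P, i, hP, hi, hTiP, h_lift⟩ := h_factor
  have error_le : ‖T x₀ - T (i (P x₀))‖ ≤ θ :=
    ((T - T ∘L i ∘L P).unit_le_opNorm x₀ norm_x₀).trans hTiP
  have almost_attains : 1 - 2 * θ < ‖T (i (P x₀))‖ := by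
    linarith [norm_le_norm_sub_add (T x₀) (T (i (P x₀)))]
  have near : HasAttainingNear (T ∘L i) (P x₀) (ε + 2 * θ) :=
    h.hasAttainingNear_of_norm_le hε hθη hθ (hT.comp_clm i)
      ((norm_comp_le_of_norm_le_one T hi).trans norm_T)
      ((P.unit_le_opNorm x₀ norm_x₀).trans hP) almost_attains
  exact (near.of_liftsNear hP hTiP h_lift).mono (by linarith)

lemma bpbpCompactWith_of_factorsApproximately {κ : Type*} {Z : κ → Type*}
    [∀ k, NormedAddCommGroup (Z k)] [∀ k, NormedSpace 𝕜 (Z k)] {η : ℝ → ℝ}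
    (h : ∀ k, BPBpCompactWith 𝕜 (Z k) Y η)
    (h_factor : ∀ T : X →L[𝕜] Y, IsCompactOperator T → ∀ x, ‖x‖ ≤ 1 → ∀ δ, 0 < δ →
      ∃ k, FactorsApproximately (Z k) T x δ) :
    BPBpCompactWith 𝕜 X Y fun ε => min (η (ε / 2) / 2) (min (ε / 6) (1 / 2)) := by
  intro ε hε
  set θ := min (η (ε / 2) / 2) (min (ε / 6) (1 / 2))
  have θ_pos : 0 < θ := by
    obtain ⟨k, -⟩ := h_factor 0 isCompactOperator_zero 0 (by simp) 1 one_pos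
    have := (h k _ (half_pos hε)).1
    positivity
  have θ_le_η : θ ≤ η (ε / 2) / 2 := min_le_left _ _
  have θ_le_ε : θ ≤ ε / 6 := (min_le_right _ _).trans (min_le_left _ _)
  have θ_le_half : θ ≤ 1 / 2 := (min_le_right _ _).trans (min_le_right _ _)
  refine ⟨θ_pos, fun T hT norm_T x₀ norm_x₀ hx₀ => ?_⟩
  obtain ⟨k, hk⟩ := h_factor T hT x₀ norm_x₀.le θ θ_pos
  have near : HasAttainingNear T x₀ (ε / 2 + 3 * θ) := hk.hasAttainingNear (h k) (half_pos hε)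
    (by linarith) (by linarith) hT norm_T.le norm_x₀.le hx₀
  exact near.mono (by linarith)

/-- `E` embeds `X` isometrically as an M-summand (that is, an `ℓ∞`-summand) of `Z`, and `R` is
the corresponding projection. -/
structure IsMSummand (R : Z →L[𝕜] X) (E : X →L[𝕜] Z) : Prop where
  leftInverse (x : X) : R (E x) = x
  norm_eq_max (z : Z) : ‖z‖ = max ‖R z‖ ‖z - E (R z)‖

namespace IsMSummand

variable {R : Z →L[𝕜] X} {E : X →L[𝕜] Z}

lemma norm_embedding_apply (hRE : IsMSummand R E) (x : X) : ‖E x‖ = ‖x‖ := by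
  simp [hRE.norm_eq_max (E x), hRE.leftInverse]

lemma norm_projection_apply_le (hRE : IsMSummand R E) (z : Z) : ‖R z‖ ≤ ‖z‖ :=
  hRE.norm_eq_max z ▸ le_max_left _ _

lemma norm_embedding_le (hRE : IsMSummand R E) : ‖E‖ ≤ 1 :=
  E.opNorm_le_bound zero_le_one fun x => by rw [hRE.norm_embedding_apply, one_mul]

lemma norm_projection_le (hRE : IsMSummand R E) : ‖R‖ ≤ 1 :=
  R.opNorm_le_bound zero_le_one fun z => by simpa using hRE.norm_projection_apply_le z

lemma comp_comp_eq (hRE : IsMSummand R E) (T : X →L[𝕜] Y) : (T ∘L R) ∘L E = T := by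
  ext x
  simp [hRE.leftInverse]

/- Write `z = u + v` with `u` in the summand. As `‖v‖ ≤ 1/2`, the vector `z` is the midpoint of
`u` and `u + 2v`, both in the unit ball, so an operator attaining its norm at `z` attains it
at `u`. -/
lemma hasAttainingNear (hRE : IsMSummand R E) {T : X →L[𝕜] Y} {x₀ : X} {ε : ℝ}
    (hε : ε ≤ 1 / 2) (h : HasAttainingNear (T ∘L R) (E x₀) ε) :
    HasAttainingNear T x₀ ε := by
  obtain ⟨S, z, hS, norm_S, norm_z, attains, hz, hST⟩ := h
  have norm_Rz : ‖R z‖ ≤ 1 := (hRE.norm_projection_apply_le z).trans_eq norm_z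
  have near_x₀ : ‖x₀ - R z‖ ≤ ‖E x₀ - z‖ := by
    simpa [hRE.leftInverse] using hRE.norm_projection_apply_le (E x₀ - z)
  have norm_rest : ‖z - E (R z)‖ ≤ ‖E x₀ - z‖ := by
    have := (le_max_right _ _).trans_eq (hRE.norm_eq_max (E x₀ - z)).symm
    rwa [map_sub, map_sub, hRE.leftInverse, sub_sub_sub_comm, sub_self, zero_sub,
      norm_neg] at this
  have norm_reflected : ‖E (R z) + (2 : 𝕜) • (z - E (R z))‖ ≤ 1 := by
    rw [hRE.norm_eq_max]
    simp only [map_add, map_smul, map_sub, hRE.leftInverse, sub_self, smul_zero, add_zero,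
      add_sub_cancel_left, norm_smul, RCLike.norm_two]
    exact max_le norm_Rz (by linarith)
  have attains_ERz : ‖S (E (R z))‖ = 1 :=
    norm_apply_eq_one_of_add_smul norm_S.le ((hRE.norm_embedding_apply _).trans_le norm_Rz)
      norm_reflected (by rwa [add_sub_cancel])
  refine hasAttainingNear_of_norm_le (hS.comp_clm E)
    ((norm_comp_le_of_norm_le_one S hRE.norm_embedding_le).trans norm_S.le) norm_Rz attains_ERz
    (near_x₀.trans_lt hz) ?_
  rw [← hRE.comp_comp_eq T, ← ContinuousLinearMap.sub_comp]
  exact (norm_comp_le_of_norm_le_one _ hRE.norm_embedding_le).trans_lt hST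

lemma bpbpCompactWith (hRE : IsMSummand R E) {η : ℝ → ℝ} (h : BPBpCompactWith 𝕜 Z Y η) :
    BPBpCompactWith 𝕜 X Y fun ε => η (min ε (1 / 2)) := by
  intro ε hε
  obtain ⟨η_pos, h_attain⟩ := h (min ε (1 / 2)) (by positivity)
  refine ⟨η_pos, fun T hT norm_T x₀ norm_x₀ hx₀ => ?_⟩
  have norm_TR : ‖T ∘L R‖ = 1 := by
    refine ((norm_comp_le_of_norm_le_one T hRE.norm_projection_le).trans_eq norm_T).antisymm ?_
    have := norm_comp_le_of_norm_le_one (T ∘L R) hRE.norm_embedding_le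
    rwa [hRE.comp_comp_eq, norm_T] at this
  have near : HasAttainingNear (T ∘L R) (E x₀) (min ε (1 / 2)) :=
    h_attain _ (hT.comp_clm R) norm_TR _ ((hRE.norm_embedding_apply x₀).trans norm_x₀)
      (by simpa [hRE.leftInverse] using hx₀)
  exact (hRE.hasAttainingNear (min_le_right _ _) near).mono (min_le_left _ _)

end IsMSummand

end Transfer

section SequenceSpace

variable (𝕜 : Type*) [RCLike 𝕜] (n : ℕ)

/-- Restriction of a null sequence to its first `n` terms. -/
def c0Restrict : C₀(ℕ, 𝕜) →L[𝕜] Fin n → 𝕜 :=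
  LinearMap.mkContinuous
    { toFun := fun z j => z j
      map_add' := fun _ _ => rfl
      map_smul' := fun _ _ => rfl }
    1 fun z => (pi_norm_le_iff_of_nonneg (by positivity)).2 fun j =>
      (one_mul ‖z‖).symm ▸ zeroAtInfty_norm_apply_le z j

/-- Extension of an `n`-tuple by zero to a null sequence. -/
def c0Extend : (Fin n → 𝕜) →L[𝕜] C₀(ℕ, 𝕜) :=
  LinearMap.toContinuousLinearMap
    { toFun := fun a =>
        { toFun := fun k => if h : k < n then a ⟨k, h⟩ else 0
          continuous_toFun := continuous_of_discreteTopology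
          zero_at_infty' := by
            refine tendsto_const_nhds.congr' ?_
            rw [Filter.cocompact_eq_cofinite, Nat.cofinite_eq_atTop]
            filter_upwards [Filter.eventually_ge_atTop n] with k hk
            rw [dif_neg hk.not_gt] }
      map_add' := fun a b => by
        ext k
        by_cases hk : k < n <;> simp [hk]
      map_smul' := fun c a => by
        ext k
        by_cases hk : k < n <;> simp [hk] }

variable {𝕜 n}

lemma c0Extend_apply_of_lt (a : Fin n → 𝕜) {k : ℕ} (hk : k < n) : c0Extend 𝕜 n a k = a ⟨k, hk⟩ :=
  dif_pos hk

lemma c0Extend_apply_of_le (a : Fin n → 𝕜) {k : ℕ} (hk : n ≤ k) : c0Extend 𝕜 n a k = 0 :=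
  dif_neg hk.not_gt

lemma isMSummand_c0 : IsMSummand (c0Restrict 𝕜 n) (c0Extend 𝕜 n) where
  leftInverse a := funext fun j => c0Extend_apply_of_lt a j.2
  norm_eq_max z := by
    have tail_apply_of_lt {k : ℕ} (hk : k < n) :
        (z - c0Extend 𝕜 n (c0Restrict 𝕜 n z)) k = 0 :=
      sub_eq_zero.2 (c0Extend_apply_of_lt (c0Restrict 𝕜 n z) hk).symm
    have tail_apply_of_le {k : ℕ} (hk : n ≤ k) :
        (z - c0Extend 𝕜 n (c0Restrict 𝕜 n z)) k = z k := by
      rw [ZeroAtInftyContinuousMap.sub_apply, c0Extend_apply_of_le _ hk, sub_zero]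
    refine le_antisymm (zeroAtInfty_norm_le (by positivity) fun k => ?_) (max_le ?_ ?_)
    · obtain hk | hk := lt_or_ge k n
      · exact le_max_of_le_left (norm_le_pi_norm (c0Restrict 𝕜 n z) ⟨k, hk⟩)
      · exact le_max_of_le_right (tail_apply_of_le hk ▸ zeroAtInfty_norm_apply_le _ k)
    · exact (pi_norm_le_iff_of_nonneg (norm_nonneg z)).2 fun j => zeroAtInfty_norm_apply_le z j
    · refine zeroAtInfty_norm_le (norm_nonneg z) fun k => ?_
      obtain hk | hk := lt_or_ge k n
      · simp [tail_apply_of_lt hk]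
      · exact tail_apply_of_le hk ▸ zeroAtInfty_norm_apply_le z k

end SequenceSpace

theorem bpbp_compact_C0_general {𝕜 : Type*} [RCLike 𝕜] {Y : Type*}
    [NormedAddCommGroup Y] [NormedSpace 𝕜 Y]
    (L : Type*) [TopologicalSpace L] [LocallyCompactSpace L] [T2Space L]
    (h : BPBpCompact 𝕜 C₀(ℕ, 𝕜) Y) : BPBpCompact 𝕜 C₀(L, 𝕜) Y := by
  obtain ⟨η, hη⟩ := h
  have property_fin (n : ℕ) : BPBpCompactWith 𝕜 (Fin n → 𝕜) Y fun ε => η (min ε (1 / 2)) :=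
    isMSummand_c0.bpbpCompactWith hη
  exact ⟨_, bpbpCompactWith_of_factorsApproximately property_fin
    fun T hT f hf δ hδ => exists_factorsApproximately_fin hT hf hδ⟩

/-- Theorem 3.1: if (c₀, Y) has the BPBp for compact operators, then so does (C₀(L), Y)
for every locally compact Hausdorff topological space L. -/
theorem bpbp_compact_C0 {𝕜 : Type*} [RCLike 𝕜] {Y : Type*}
    [NormedAddCommGroup Y] [NormedSpace 𝕜 Y] [CompleteSpace Y]
    (L : Type*) [TopologicalSpace L] [LocallyCompactSpace L] [T2Space L]
    (h : BPBpCompact 𝕜 (ZeroAtInftyContinuousMap ℕ 𝕜) Y) :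
    BPBpCompact 𝕜 (ZeroAtInftyContinuousMap L 𝕜) Y :=
  bpbp_compact_C0_general L h
end
end

section
/- Let Y be a Banach space. If the pair (c₀, Y) has the Bishop–Phelps–Bollobás property (BPBp), then the pair (c₀, Y) has the BPBp for compact operators. -/
open MeasureTheory

noncomputable section

/-- A pair (X, Y) has the Bishop–Phelps–Bollobás property (for all bounded operators). -/
def BPBp (𝕜 : Type*) [RCLike 𝕜] (X Y : Type*) [NormedAddCommGroup X]
    [NormedSpace 𝕜 X] [NormedAddCommGroup Y] [NormedSpace 𝕜 Y] : Prop :=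
  ∃ η : ℝ → ℝ, ∀ ε : ℝ, 0 < ε → 0 < η ε ∧
    ∀ T : X →L[𝕜] Y, ‖T‖ = 1 →
      ∀ x₀ : X, ‖x₀‖ = 1 → 1 - η ε < ‖T x₀‖ →
        ∃ S : X →L[𝕜] Y, ∃ x₁ : X, ‖S‖ = 1 ∧ ‖x₁‖ = 1 ∧
          ‖S x₁‖ = 1 ∧ ‖x₀ - x₁‖ < ε ∧ ‖S - T‖ < ε

/-!
The finite truncations of `c₀` are compact M-projections converging strongly to the identity. An
M-projection `P` satisfies `‖φ ∘ P‖ + ‖φ - φ ∘ P‖ ≤ ‖φ‖` on functionals, which forces `φ ∘ Pₙ → φ`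
in norm, and hence `T ∘ Pₙ → T` for every compact `T`, as the norm on the image of a ball under `T`
is determined up to `ε` by finitely many functionals. Given a compact `T`, apply the BPBp to the
normalization `B` of some `T ∘ Pₙ`, obtaining `S` attaining its norm at `x₁`. If `2‖x₁ - P x₁‖ ≤ 1`,
then `x₁` is the midpoint of `P x₁` and `P x₁ + 2 (x₁ - P x₁)`, both in the unit ball, so `S`
attains its norm at `P x₁` too. For a truncation `P` beyond `Pₙ`, the compact operator `S ∘ P`
therefore attains its norm at `x₁`, and it is as close to `B = B ∘ P` as `S` is.
-/

open Filter Topology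
open scoped ZeroAtInfty

section MProjection

variable {𝕜 X Y : Type*} [NontriviallyNormedField 𝕜] [NormedAddCommGroup X] [NormedSpace 𝕜 X]
  [NormedAddCommGroup Y] [NormedSpace 𝕜 Y] {P : X →L[𝕜] X}

theorem norm_apply_le_of_isMprojection (hP : IsMprojection X P) (x : X) : ‖P x‖ ≤ ‖x‖ :=
  (le_max_left _ _).trans_eq (hP.Mnorm x).symm

theorem norm_sub_apply_le_of_isMprojection (hP : IsMprojection X P) (x : X) : ‖x - P x‖ ≤ ‖x‖ :=
  (le_max_right _ _).trans_eq (hP.Mnorm x).symm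

theorem opNorm_le_one_of_isMprojection (hP : IsMprojection X P) : ‖P‖ ≤ 1 :=
  P.opNorm_le_bound zero_le_one fun x => by
    simpa only [one_mul] using norm_apply_le_of_isMprojection hP x

theorem opNorm_comp_le_of_isMprojection (hP : IsMprojection X P) (S : X →L[𝕜] Y) :
    ‖S ∘L P‖ ≤ ‖S‖ := by
  grw [ContinuousLinearMap.opNorm_comp_le, opNorm_le_one_of_isMprojection hP, mul_one]

theorem norm_apply_add_sub_apply_of_isMprojection (hP : IsMprojection X P) (x z : X) :
    ‖P x + (z - P z)‖ = max ‖P x‖ ‖z - P z‖ := by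
  have apply_apply (y : X) : P (P y) = P y := DFunLike.congr_fun hP.proj.eq y
  have apply_eq : P (P x + (z - P z)) = P x := by
    rw [map_add, map_sub, apply_apply, apply_apply, sub_self, add_zero]
  have h := hP.Mnorm (P x + (z - P z))
  rwa [sub_smul, one_smul, ContinuousLinearMap.smul_def, apply_eq, add_sub_cancel_left] at h

end MProjection

section RCLikeMProjection

variable {𝕜 X Y : Type*} [RCLike 𝕜] [NormedAddCommGroup X] [NormedSpace 𝕜 X]
  [NormedAddCommGroup Y] [NormedSpace 𝕜 Y] {P : X →L[𝕜] X}

theorem norm_apply_add_norm_apply_sub_le_of_isMprojection (hP : IsMprojection X P)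
    (φ : StrongDual 𝕜 X) (x z : X) :
    ‖φ (P x)‖ + ‖φ (z - P z)‖ ≤ ‖φ‖ * max ‖x‖ ‖z‖ := by
  obtain ⟨c, hc, hcx⟩ := RCLike.exists_norm_eq_mul_self (φ (P x))
  obtain ⟨d, hd, hdz⟩ := RCLike.exists_norm_eq_mul_self (φ (z - P z))
  have apply_rotated : φ (P (c • x) + (d • z - P (d • z))) =
      ((‖φ (P x)‖ + ‖φ (z - P z)‖ : ℝ) : 𝕜) := by
    rw [RCLike.ofReal_add, hcx, hdz, map_smul, map_smul, ← smul_sub, map_add, map_smul, map_smul,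
      smul_eq_mul, smul_eq_mul]
  have norm_rotated : ‖P (c • x) + (d • z - P (d • z))‖ ≤ max ‖x‖ ‖z‖ := by
    rw [norm_apply_add_sub_apply_of_isMprojection hP]
    refine max_le_max ((norm_apply_le_of_isMprojection hP _).trans_eq ?_)
      ((norm_sub_apply_le_of_isMprojection hP _).trans_eq ?_) <;>
      simp only [norm_smul, hc, hd, one_mul]
  calc ‖φ (P x)‖ + ‖φ (z - P z)‖ = ‖φ (P (c • x) + (d • z - P (d • z)))‖ := by
        rw [apply_rotated, RCLike.norm_of_nonneg (by positivity)]
    _ ≤ ‖φ‖ * max ‖x‖ ‖z‖ := φ.le_opNorm_of_le norm_rotated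

theorem tendsto_dual_comp_of_isMprojection {ι : Type*} {l : Filter ι} {P : ι → X →L[𝕜] X}
    (hP : ∀ i, IsMprojection X (P i)) (hPx : ∀ x, Tendsto (fun i => P i x) l (𝓝 x))
    (φ : StrongDual 𝕜 X) : Tendsto (fun i => φ ∘L P i) l (𝓝 φ) := by
  rw [Metric.tendsto_nhds]
  intro ε hε
  obtain ⟨x, hx, hφx⟩ := φ.exists_lt_apply_of_lt_opNorm (sub_lt_self ‖φ‖ (half_pos hε))
  have hφPx : Tendsto (fun i => ‖φ (P i x)‖) l (𝓝 ‖φ x‖) :=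
    ((φ.continuous.tendsto x).comp (hPx x)).norm
  filter_upwards [hφPx.eventually_const_lt hφx] with i hi
  rw [dist_comm, dist_eq_norm]
  refine (ContinuousLinearMap.opNorm_le_of_unit_norm (half_pos hε).le fun z hz => ?_).trans_lt
    (half_lt_self hε)
  have h := norm_apply_add_norm_apply_sub_le_of_isMprojection (hP i) φ x z
  rw [hz, max_eq_right hx.le, mul_one, map_sub] at h
  exact le_of_add_le_add_left (h.trans (by linarith))

theorem norm_apply_apply_eq_of_isMprojection (hP : IsMprojection X P) {S : X →L[𝕜] Y} {x : X}
    (hSx : ‖S x‖ = ‖S‖ * ‖x‖) (hx : 2 * ‖x - P x‖ ≤ ‖x‖) : ‖S (P x)‖ = ‖S‖ * ‖x‖ := by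
  have norm_reflection : ‖P x + ((2 : 𝕜) • x - P ((2 : 𝕜) • x))‖ ≤ ‖x‖ := by
    rw [norm_apply_add_sub_apply_of_isMprojection hP, map_smul, ← smul_sub, norm_smul,
      RCLike.norm_ofNat]
    exact max_le (norm_apply_le_of_isMprojection hP x) hx
  have midpoint : P x + (P x + ((2 : 𝕜) • x - P ((2 : 𝕜) • x))) = (2 : 𝕜) • x := by
    rw [map_smul, two_smul, two_smul]
    abel
  have h : 2 * (‖S‖ * ‖x‖) ≤ ‖S (P x)‖ + ‖S‖ * ‖x‖ :=
    calc 2 * (‖S‖ * ‖x‖) = ‖S ((2 : 𝕜) • x)‖ := by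
          rw [map_smul, norm_smul, RCLike.norm_ofNat, hSx]
      _ = ‖S (P x) + S (P x + ((2 : 𝕜) • x - P ((2 : 𝕜) • x)))‖ := by rw [← map_add, midpoint]
      _ ≤ ‖S (P x)‖ + ‖S (P x + ((2 : 𝕜) • x - P ((2 : 𝕜) • x)))‖ := norm_add_le _ _
      _ ≤ ‖S (P x)‖ + ‖S‖ * ‖x‖ := by grw [S.le_opNorm_of_le norm_reflection]
  exact le_antisymm (S.le_opNorm_of_le (norm_apply_le_of_isMprojection hP x)) (by linarith)

end RCLikeMProjection

section Approximation

variable {𝕜 X Y ι : Type*} [RCLike 𝕜] [NormedAddCommGroup X] [NormedSpace 𝕜 X]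
  [NormedAddCommGroup Y] [NormedSpace 𝕜 Y] {l : Filter ι}

variable (𝕜) in
theorem exists_finite_dual_norm_le_of_totallyBounded {K : Set Y}
    (hK : TotallyBounded K) {ε : ℝ} (hε : 0 < ε) :
    ∃ F : Set (StrongDual 𝕜 Y), F.Finite ∧ ∀ y ∈ K, ∃ φ ∈ F, ‖y‖ ≤ ‖φ y‖ + ε := by
  choose φ norm_φ φ_apply using exists_dual_vector'' 𝕜 (E := Y)
  obtain ⟨t, ht, hKt⟩ := Metric.totallyBounded_iff.1 hK (ε / 2) (half_pos hε)
  refine ⟨φ '' t, ht.image φ, fun y hy => ?_⟩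
  obtain ⟨w, hw, hyw⟩ := Set.mem_iUnion₂.1 (hKt hy)
  rw [mem_ball_iff_norm'] at hyw
  refine ⟨φ w, Set.mem_image_of_mem φ hw, ?_⟩
  have norm_w : ‖w‖ ≤ ‖φ w y‖ + ‖w - y‖ :=
    calc ‖w‖ = ‖φ w w‖ := by rw [φ_apply, RCLike.norm_ofReal, abs_norm]
      _ ≤ ‖φ w y‖ + ‖φ w (w - y)‖ := by simpa only [map_sub] using norm_le_insert' (φ w w) (φ w y)
      _ ≤ ‖φ w y‖ + ‖w - y‖ := by
          grw [(φ w).le_of_opNorm_le (norm_φ w) (w - y), one_mul]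
  linarith [norm_le_insert w y]

theorem tendsto_comp_of_isCompactOperator {P : ι → X →L[𝕜] X} {C : ℝ} (hPC : ∀ i, ‖P i‖ ≤ C)
    (hP : ∀ φ : StrongDual 𝕜 X, Tendsto (fun i => φ ∘L P i) l (𝓝 φ))
    {T : X →L[𝕜] Y} (hT : IsCompactOperator T) : Tendsto (fun i => T ∘L P i) l (𝓝 T) := by
  rw [Metric.tendsto_nhds]
  intro ε hε
  have hK : TotallyBounded (T '' Metric.closedBall 0 (1 + C)) :=
    (hT.isCompact_closure_image_closedBall (f := T.toLinearMap) (1 + C)).totallyBounded.subset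
      subset_closure
  obtain ⟨F, hF, norm_le⟩ :=
    exists_finite_dual_norm_le_of_totallyBounded 𝕜 hK (half_pos (half_pos hε))
  have close_on_F : ∀ᶠ i in l, ∀ φ ∈ F, dist ((φ ∘L T) ∘L P i) (φ ∘L T) < ε / 2 / 2 :=
    (eventually_all_finite hF).2 fun φ _ => Metric.tendsto_nhds.1 (hP (φ ∘L T)) _
      (half_pos (half_pos hε))
  filter_upwards [close_on_F] with i hi
  rw [dist_comm, dist_eq_norm]
  refine (ContinuousLinearMap.opNorm_le_of_unit_norm (half_pos hε).le fun x hx => ?_).trans_lt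
    (half_lt_self hε)
  have mem_ball : x - P i x ∈ Metric.closedBall 0 (1 + C) := by
    rw [mem_closedBall_zero_iff]
    grw [norm_sub_le, (P i).le_opNorm, hPC i, hx, mul_one]
  obtain ⟨φ, hφ, hφx⟩ := norm_le _ (Set.mem_image_of_mem T mem_ball)
  have hφT : ‖φ (T (x - P i x))‖ ≤ ε / 2 / 2 := by
    have h := (φ ∘L T - (φ ∘L T) ∘L P i).le_opNorm x
    rw [hx, mul_one, ← dist_eq_norm, dist_comm] at h
    simpa using h.trans (hi φ hφ).le
  calc ‖(T - T ∘L P i) x‖ = ‖T (x - P i x)‖ := by simp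
    _ ≤ ε / 2 := by linarith

theorem tendsto_inv_norm_smul {A : ι → Y} {y : Y} (hA : Tendsto A l (𝓝 y)) (hy : ‖y‖ = 1) :
    Tendsto (fun i => (‖A i‖⁻¹ : 𝕜) • A i) l (𝓝 y) := by
  have h : Tendsto (fun i => ((‖A i‖ : ℝ) : 𝕜)⁻¹) l (𝓝 1) := by
    simpa [hy] using ((RCLike.continuous_ofReal (K := 𝕜)).tendsto _ |>.comp hA.norm).inv₀
      (by simp [hy])
  simpa using h.smul hA

theorem exists_comp_eq_self_near [l.NeBot] {P : ι → X →L[𝕜] X}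
    (hP : ∀ i, IsIdempotentElem (P i)) {T : X →L[𝕜] Y}
    (hTP : Tendsto (fun i => T ∘L P i) l (𝓝 T)) (hT : ‖T‖ = 1) {x : X} {r ε : ℝ}
    (hr : r < ‖T x‖) (hε : 0 < ε) :
    ∃ i, ∃ B : X →L[𝕜] Y, B ∘L P i = B ∧ ‖B‖ = 1 ∧ r < ‖B x‖ ∧ ‖B - T‖ < ε := by
  have tendsto_normalized := tendsto_inv_norm_smul (𝕜 := 𝕜) hTP hT
  have norm_apply_gt : ∀ᶠ i in l, r < ‖((‖T ∘L P i‖⁻¹ : 𝕜) • T ∘L P i) x‖ :=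
    (((ContinuousLinearMap.apply 𝕜 Y x).continuous.tendsto T).comp
      tendsto_normalized).norm.eventually_const_lt hr
  have comp_ne_zero : ∀ᶠ i in l, T ∘L P i ≠ 0 :=
    hTP.eventually_ne (norm_ne_zero_iff.1 (hT.trans_ne one_ne_zero))
  obtain ⟨i, hi, hix, hi0⟩ := ((Metric.tendsto_nhds.1 tendsto_normalized ε hε).and
    (norm_apply_gt.and comp_ne_zero)).exists
  refine ⟨i, (‖T ∘L P i‖⁻¹ : 𝕜) • T ∘L P i, ?_, norm_smul_inv_norm hi0, hix, ?_⟩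
  · rw [ContinuousLinearMap.smul_comp, ContinuousLinearMap.comp_assoc]
    congr 2
    exact (hP i).eq
  · rwa [← dist_eq_norm]

theorem BPBp.bpbpCompact_of_isMprojection [l.NeBot] {P : ι → X →L[𝕜] X} (h : BPBp 𝕜 X Y)
    (hP : ∀ i, IsMprojection X (P i)) (hPc : ∀ i, IsCompactOperator (P i))
    (hPx : ∀ x, Tendsto (fun i => P i x) l (𝓝 x)) (hPP : ∀ i, ∀ᶠ j in l, P i ∘L P j = P i) :
    BPBpCompact 𝕜 X Y := by
  obtain ⟨η, hη⟩ := h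
  refine ⟨fun ε => η (ε / 2), fun ε hε => ⟨(hη _ (half_pos hε)).1, fun T hT hT1 x₀ hx₀ hTx₀ => ?_⟩⟩
  have hTP : Tendsto (fun i => T ∘L P i) l (𝓝 T) :=
    tendsto_comp_of_isCompactOperator (fun i => opNorm_le_one_of_isMprojection (hP i))
      (tendsto_dual_comp_of_isMprojection hP hPx) hT
  obtain ⟨i, B, hBP, hB1, hBx₀, hBT⟩ :=
    exists_comp_eq_self_near (fun i => (hP i).proj) hTP hT1 hTx₀ (half_pos hε)
  obtain ⟨S, x₁, hS1, hx₁, hSx₁, hx₀x₁, hSB⟩ := (hη _ (half_pos hε)).2 B hB1 x₀ hx₀ hBx₀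
  have tail_small : ∀ᶠ j in l, ‖P j x₁ - x₁‖ < 1 / 2 := by
    simpa only [dist_eq_norm] using Metric.tendsto_nhds.1 (hPx x₁) (1 / 2) one_half_pos
  obtain ⟨j, hij, hj⟩ := ((hPP i).and tail_small).exists
  have hBPj : B ∘L P j = B := by rw [← hBP, ContinuousLinearMap.comp_assoc, hij]
  have hSPx₁ : ‖(S ∘L P j) x₁‖ = 1 := by
    have h := norm_apply_apply_eq_of_isMprojection (hP j) (S := S) (x := x₁)
    rw [hS1, hx₁, hSx₁, mul_one, norm_sub_rev] at h
    exact h rfl (by linarith)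
  have hSP1 : ‖S ∘L P j‖ = 1 := by
    refine le_antisymm ((opNorm_comp_le_of_isMprojection (hP j) S).trans_eq hS1) ?_
    simpa only [hSPx₁, hx₁, mul_one] using (S ∘L P j).le_opNorm x₁
  have hSPB : ‖S ∘L P j - B‖ ≤ ‖S - B‖ :=
    calc ‖S ∘L P j - B‖ = ‖(S - B) ∘L P j‖ := by rw [ContinuousLinearMap.sub_comp, hBPj]
      _ ≤ ‖S - B‖ := opNorm_comp_le_of_isMprojection (hP j) _
  refine ⟨S ∘L P j, x₁, (hPc j).clm_comp S, hSP1, hx₁, hSPx₁, hx₀x₁.trans (half_lt_self hε), ?_⟩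
  linarith [norm_sub_le_norm_sub_add_norm_sub (S ∘L P j) B T]

end Approximation

theorem isCompactOperator_of_finiteDimensional_range {𝕜 X Y : Type*}
    [NontriviallyNormedField 𝕜] [LocallyCompactSpace 𝕜] [NormedAddCommGroup X] [NormedSpace 𝕜 X]
    [NormedAddCommGroup Y] [NormedSpace 𝕜 Y]
    (T : X →L[𝕜] Y) [FiniteDimensional 𝕜 T.range] : IsCompactOperator T := by
  have : ProperSpace T.range := FiniteDimensional.proper 𝕜 _
  have h : IsCompactOperator T.rangeRestrict :=
    isCompactOperator_of_locallyCompactSpace_dom _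
  exact h.clm_comp T.range.subtypeL

section Truncation

variable {α E : Type*} [TopologicalSpace α] [NormedAddCommGroup E]

theorem zeroAtInfty_norm_le_iff {f : C₀(α, E)} {C : ℝ} (hC : 0 ≤ C) :
    ‖f‖ ≤ C ↔ ∀ a, ‖f a‖ ≤ C :=
  BoundedContinuousFunction.norm_le (f := f.toBCF) hC

theorem norm_zeroAtInfty_apply_le (f : C₀(α, E)) (a : α) : ‖f a‖ ≤ ‖f‖ :=
  f.toBCF.norm_coe_le_norm a

variable [DiscreteTopology α] (𝕜 : Type*) [NontriviallyNormedField 𝕜] [NormedSpace 𝕜 E]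

/-- The truncation of functions in `C₀(α, E)`, for discrete `α`, to a finite set `s`: the operator
multiplying by the indicator of `s`. -/
def zeroAtInftyTruncate (s : Finset α) : C₀(α, E) →L[𝕜] C₀(α, E) :=
  LinearMap.mkContinuous
    { toFun f :=
        { toFun := (s : Set α).indicator f
          continuous_toFun := continuous_of_discreteTopology
          zero_at_infty' := by
            rw [cocompact_eq_cofinite]
            refine tendsto_const_nhds.congr' ?_
            filter_upwards [s.finite_toSet.compl_mem_cofinite] with a ha
            exact (Set.indicator_of_notMem ha f).symm }
      map_add' f g := DFunLike.coe_injective (Set.indicator_add _ f g)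
      map_smul' c f := DFunLike.coe_injective (Set.indicator_const_smul _ c f) }
    1 fun f => by
      rw [one_mul, zeroAtInfty_norm_le_iff (norm_nonneg f)]
      exact fun a => (norm_indicator_le_norm_self f a).trans (norm_zeroAtInfty_apply_le f a)

theorem coe_zeroAtInftyTruncate (s : Finset α) (f : C₀(α, E)) :
    ⇑(zeroAtInftyTruncate 𝕜 s f) = (s : Set α).indicator f :=
  rfl

theorem coe_sub_zeroAtInftyTruncate (s : Finset α) (f : C₀(α, E)) :
    ⇑(f - zeroAtInftyTruncate 𝕜 s f) = (s : Set α)ᶜ.indicator f :=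
  (Set.indicator_compl _ _).symm

theorem zeroAtInftyTruncate_comp_of_subset {s t : Finset α} (hst : s ⊆ t) :
    zeroAtInftyTruncate 𝕜 s ∘L zeroAtInftyTruncate 𝕜 t =
      (zeroAtInftyTruncate 𝕜 s : C₀(α, E) →L[𝕜] C₀(α, E)) := by
  ext f : 1
  refine DFunLike.coe_injective ?_
  rw [ContinuousLinearMap.comp_apply, coe_zeroAtInftyTruncate, coe_zeroAtInftyTruncate,
    Set.indicator_indicator, Set.inter_eq_left.2 (Finset.coe_subset.2 hst), coe_zeroAtInftyTruncate]

theorem isMprojection_zeroAtInftyTruncate (s : Finset α) :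
    IsMprojection C₀(α, E) (zeroAtInftyTruncate 𝕜 s : C₀(α, E) →L[𝕜] C₀(α, E)) where
  proj := zeroAtInftyTruncate_comp_of_subset 𝕜 (Finset.Subset.refl s)
  Mnorm f := by
    rw [sub_smul, one_smul, ContinuousLinearMap.smul_def]
    refine le_antisymm ((zeroAtInfty_norm_le_iff (by positivity)).2 fun a => ?_) (max_le ?_ ?_)
    · by_cases ha : a ∈ (s : Set α)
      · refine le_max_of_le_left ((norm_zeroAtInfty_apply_le _ a).trans' ?_)
        rw [coe_zeroAtInftyTruncate, Set.indicator_of_mem ha]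
      · refine le_max_of_le_right ((norm_zeroAtInfty_apply_le _ a).trans' ?_)
        rw [coe_sub_zeroAtInftyTruncate, Set.indicator_of_mem (Set.mem_compl ha)]
    · refine (zeroAtInfty_norm_le_iff (norm_nonneg f)).2 fun a => ?_
      exact (norm_indicator_le_norm_self f a).trans (norm_zeroAtInfty_apply_le f a)
    · refine (zeroAtInfty_norm_le_iff (norm_nonneg f)).2 fun a => ?_
      rw [coe_sub_zeroAtInftyTruncate]
      exact (norm_indicator_le_norm_self f a).trans (norm_zeroAtInfty_apply_le f a)

theorem tendsto_zeroAtInftyTruncate (f : C₀(α, E)) :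
    Tendsto (fun s => zeroAtInftyTruncate 𝕜 s f) atTop (𝓝 f) := by
  rw [ZeroAtInftyContinuousMap.tendsto_iff_tendstoUniformly, Metric.tendstoUniformly_iff]
  intro ε hε
  have finite_large : {a | ¬dist (f a) 0 < ε}.Finite := by
    have h := Metric.tendsto_nhds.1 f.zero_at_infty' ε hε
    rwa [cocompact_eq_cofinite] at h
  filter_upwards [eventually_ge_atTop finite_large.toFinset] with s hs a
  rw [coe_zeroAtInftyTruncate]
  by_cases ha : a ∈ (s : Set α)
  · rwa [Set.indicator_of_mem ha, dist_self]
  · rw [Set.indicator_of_notMem ha]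
    by_contra hfa
    exact ha (hs (finite_large.mem_toFinset.2 hfa))

theorem isCompactOperator_zeroAtInftyTruncate [LocallyCompactSpace 𝕜] [FiniteDimensional 𝕜 E]
    (s : Finset α) :
    IsCompactOperator (zeroAtInftyTruncate 𝕜 s : C₀(α, E) →L[𝕜] C₀(α, E)) := by
  let restrict : (zeroAtInftyTruncate 𝕜 s : C₀(α, E) →L[𝕜] C₀(α, E)).range →ₗ[𝕜] s → E :=
    { toFun f a := f.1 a
      map_add' _ _ := rfl
      map_smul' _ _ := rfl }
  have restrict_injective : Function.Injective restrict := by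
    rintro ⟨_, f, rfl⟩ ⟨_, g, rfl⟩ hfg
    refine Subtype.ext (DFunLike.coe_injective (Set.indicator_congr fun a ha => ?_))
    have h := congrFun hfg ⟨a, ha⟩
    simpa [restrict, coe_zeroAtInftyTruncate, ha] using h
  have := FiniteDimensional.of_injective restrict restrict_injective
  exact isCompactOperator_of_finiteDimensional_range _

end Truncation

theorem bpbp_compact_c0_of_bpbp_general {𝕜 α E Y : Type*} [RCLike 𝕜]
    [TopologicalSpace α] [DiscreteTopology α]
    [NormedAddCommGroup E] [NormedSpace 𝕜 E] [FiniteDimensional 𝕜 E]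
    [NormedAddCommGroup Y] [NormedSpace 𝕜 Y]
    (h : BPBp 𝕜 C₀(α, E) Y) : BPBpCompact 𝕜 C₀(α, E) Y :=
  h.bpbpCompact_of_isMprojection (isMprojection_zeroAtInftyTruncate 𝕜)
    (isCompactOperator_zeroAtInftyTruncate 𝕜) (tendsto_zeroAtInftyTruncate 𝕜) fun s =>
    (eventually_ge_atTop s).mono fun _ hst => zeroAtInftyTruncate_comp_of_subset 𝕜 hst

/-- Corollary 3.3: if (c₀, Y) has the BPBp, then it has the BPBp for compact operators. -/
theorem bpbp_compact_c0_of_bpbp {𝕜 : Type*} [RCLike 𝕜] {Y : Type*}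
    [NormedAddCommGroup Y] [NormedSpace 𝕜 Y] [CompleteSpace Y]
    (h : BPBp 𝕜 (ZeroAtInftyContinuousMap ℕ 𝕜) Y) :
    BPBpCompact 𝕜 (ZeroAtInftyContinuousMap ℕ 𝕜) Y :=
  bpbp_compact_c0_of_bpbp_general h
end
end

section
/- Let (Ω, Σ, μ) be a measure space and let X and Y be finite-dimensional Banach spaces. Then the pair (L₁(μ, X), Y) has the BPBp for compact operators. -/
open MeasureTheory

noncomputable section

/-!
Let `‖T‖ = ‖x₀‖ = 1` with `‖T x₀‖` close to `1`. Replacing `μ` by the probability measure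
`dν = ‖x₀‖ dμ` embeds `L¹(ν, X)` as an `ℓ₁`-summand of `L¹(μ, X)` and turns `x₀` into a function
`u` with `‖u(ω)‖ = 1` almost everywhere. By Radon–Nikodym in finite dimensions, `T` acts on this
summand as `f ↦ ∫ g(ω) f(ω) dν(ω)` with contractions `g(ω) : X → Y`.

If `y` norms `T x₀`, then `∫ Re y(g(ω) u(ω)) dν` is close to `1`, so by Markov's inequality
`Re y(g(ω) u(ω))` is close to `1` off a set of small measure. Compactness of the unit balls of
`X → Y`, `X` and `Y*` then gives a single functional `z` and pairs `(g'(ω), w(ω))` near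
`(g(ω), u(ω))`, chosen measurably, with `Re z(g'(ω) w(ω)) = 1`. Putting `g' = g` and `w = 0` on
the exceptional set, the operator with density `g'` attains its norm at `w / ‖w‖`, and all
constants depend only on `ε`, `X` and `Y`.
-/

open scoped NNReal

section NormAttaining

variable {𝕜 E F Y : Type*} [RCLike 𝕜] [NormedAddCommGroup E] [NormedSpace 𝕜 E]
  [NormedAddCommGroup F] [NormedSpace 𝕜 F] [NormedAddCommGroup Y] [NormedSpace 𝕜 Y]

/-- The pair `(T, x)` is within `ε` of a pair `(S, w)` with `‖S‖ ≤ 1` and `S` preserving the norm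
of `w`. This is the conclusion of the Bishop–Phelps–Bollobás property before `w` is normalised;
leaving the norm of `w` free lets `w` vanish on part of the measure space. -/
def HasNormAttainingPerturbation (T : E →L[𝕜] Y) (x : E) (ε : ℝ) : Prop :=
  ∃ (S : E →L[𝕜] Y) (w : E), ‖S‖ ≤ 1 ∧ ‖S w‖ = ‖w‖ ∧ ‖x - w‖ < ε ∧ ‖S - T‖ < ε

theorem HasNormAttainingPerturbation.exists_norm_eq_one {T : E →L[𝕜] Y} {x : E} {ε : ℝ}
    (h : HasNormAttainingPerturbation T x ε) (hx : ‖x‖ = 1) (hε : ε ≤ 1) :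
    ∃ (S : E →L[𝕜] Y) (x₁ : E),
      ‖S‖ = 1 ∧ ‖x₁‖ = 1 ∧ ‖S x₁‖ = 1 ∧ ‖x - x₁‖ < 2 * ε ∧ ‖S - T‖ < ε := by
  obtain ⟨S, w, hS, hSw, hxw, hST⟩ := h
  have norm_w_near : |1 - ‖w‖| < ε := (hx ▸ abs_norm_sub_norm_le x w).trans_lt hxw
  have w_pos : 0 < ‖w‖ := by linarith [le_abs_self (1 - ‖w‖)]
  set x₁ : E := ((‖w‖⁻¹ : ℝ) : 𝕜) • w with hx₁
  have norm_x₁ : ‖x₁‖ = 1 := by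
    rw [hx₁, norm_smul, RCLike.norm_ofReal, abs_of_pos (inv_pos.2 w_pos),
      inv_mul_cancel₀ w_pos.ne']
  have norm_S_x₁ : ‖S x₁‖ = 1 := by
    rw [hx₁, map_smul, norm_smul, hSw, ← norm_smul, ← hx₁, norm_x₁]
  have norm_S : ‖S‖ = 1 := le_antisymm hS <| by
    simpa [norm_x₁, norm_S_x₁] using S.le_opNorm x₁
  have w_near_x₁ : ‖w - x₁‖ = |1 - ‖w‖| := by
    have : w - x₁ = ((‖w‖ - 1 : ℝ) : 𝕜) • x₁ := by
      rw [hx₁, smul_smul, ← RCLike.ofReal_mul, sub_mul, mul_inv_cancel₀ w_pos.ne', one_mul]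
      simp [sub_smul]
    rw [this, norm_smul, RCLike.norm_ofReal, norm_x₁, mul_one, abs_sub_comm]
  refine ⟨S, x₁, norm_S, norm_x₁, norm_S_x₁, ?_, hST⟩
  calc ‖x - x₁‖ ≤ ‖x - w‖ + ‖w - x₁‖ := norm_sub_le_norm_sub_add_norm_sub x w x₁
    _ < 2 * ε := by linarith

/-- `E` is the `ℓ₁`-sum of the range of `V` and the kernel of `R`; only the part of `T` on the
range of `V` is perturbed. -/
theorem HasNormAttainingPerturbation.of_l1Summand {T : E →L[𝕜] Y} {V : F →L[𝕜] E}
    {R : E →L[𝕜] F} {x : F} {ε : ℝ} (hT : ‖T‖ ≤ 1) (hV : ‖V‖ ≤ 1) (hRV : ∀ z, R (V z) = z)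
    (hR : ∀ f, ‖R f‖ + ‖f - V (R f)‖ ≤ ‖f‖)
    (h : HasNormAttainingPerturbation (T ∘L V) x ε) :
    HasNormAttainingPerturbation T (V x) ε := by
  obtain ⟨S, w, hS, hSw, hxw, hST⟩ := h
  have norm_R : ‖R‖ ≤ 1 := R.opNorm_le_bound zero_le_one fun f => by
    linarith [hR f, norm_nonneg (f - V (R f))]
  have norm_V (z : F) : ‖V z‖ ≤ ‖z‖ := by simpa using V.le_of_opNorm_le hV z
  have norm_V_w : ‖V w‖ = ‖w‖ := le_antisymm (norm_V w) <| by
    simpa [hRV] using R.le_of_opNorm_le norm_R (V w)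
  refine ⟨S ∘L R + T ∘L (.id 𝕜 E - V ∘L R), V w, ?_, ?_, ?_, ?_⟩
  · refine ContinuousLinearMap.opNorm_le_bound _ zero_le_one fun f => ?_
    calc ‖S (R f) + T (f - V (R f))‖ ≤ ‖S (R f)‖ + ‖T (f - V (R f))‖ := norm_add_le _ _
      _ ≤ ‖R f‖ + ‖f - V (R f)‖ := by
        gcongr
        · simpa using S.le_of_opNorm_le hS (R f)
        · simpa using T.le_of_opNorm_le hT (f - V (R f))
      _ ≤ 1 * ‖f‖ := by linarith [hR f]
  · simp [hRV, hSw, norm_V_w]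
  · rw [← map_sub]
    exact (norm_V _).trans_lt hxw
  · have : S ∘L R + T ∘L (.id 𝕜 E - V ∘L R) - T = (S - T ∘L V) ∘L R := by
      ext f
      simp only [_root_.sub_apply, _root_.add_apply, ContinuousLinearMap.comp_apply,
        ContinuousLinearMap.id_apply, map_sub]
      abel
    rw [this]
    calc ‖(S - T ∘L V) ∘L R‖ ≤ ‖S - T ∘L V‖ * ‖R‖ := ContinuousLinearMap.opNorm_comp_le _ _
      _ ≤ ‖S - T ∘L V‖ := mul_le_of_le_one_right (norm_nonneg _) norm_R
      _ < ε := hST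

end NormAttaining

section FiniteDimensional

theorem exists_pos_forall_mem_of_sub_le {E : Type*} [TopologicalSpace E] {K U : Set E}
    {F : E → ℝ} {c : ℝ} (hK : IsCompact K) (hF : ContinuousOn F K) (hU : IsOpen U)
    (hFU : ∀ p ∈ K, c ≤ F p → p ∈ U) :
    ∃ η > 0, ∀ p ∈ K, c - η ≤ F p → p ∈ U := by
  rcases (K \ U).eq_empty_or_nonempty with hKU | hKU
  · exact ⟨1, one_pos, fun p hp _ => Set.sdiff_eq_empty.1 hKU hp⟩
  obtain ⟨q, ⟨hqK, hqU⟩, hq⟩ := (hK.diff hU).exists_isMaxOn hKU (hF.mono Set.sdiff_subset)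
  have max_lt : F q < c := not_le.1 fun hc => hqU (hFU q hqK hc)
  refine ⟨(c - F q) / 2, by linarith, fun p hp hFp => ?_⟩
  by_contra hpU
  have : F p ≤ F q := hq ⟨hp, hpU⟩
  linarith

variable {𝕜 X Y : Type*} [RCLike 𝕜] [NormedAddCommGroup X] [NormedSpace 𝕜 X]
  [NormedAddCommGroup Y] [NormedSpace 𝕜 Y]

/-- The pairs `(B, x)` of a contraction and a unit vector such that the functional `z` certifies
`‖B x‖ = 1`. -/
def normingPairs (X : Type*) [NormedAddCommGroup X] [NormedSpace 𝕜 X] (z : StrongDual 𝕜 Y) :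
    Set ((X →L[𝕜] Y) × X) :=
  {p | ‖p.1‖ ≤ 1 ∧ ‖p.2‖ = 1 ∧ RCLike.re (z (p.1 p.2)) = 1}

theorem re_apply_le_norm {z : StrongDual 𝕜 Y} (hz : ‖z‖ ≤ 1) (y : Y) :
    RCLike.re (z y) ≤ ‖y‖ :=
  (RCLike.re_le_norm _).trans (by simpa using z.le_of_opNorm_le hz y)

variable [FiniteDimensional 𝕜 X] [FiniteDimensional 𝕜 Y]

variable (𝕜 X Y) in
theorem isCompact_closedBall_prod_sphere :
    IsCompact (Metric.closedBall (0 : X →L[𝕜] Y) 1 ×ˢ Metric.sphere (0 : X) 1) := by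
  have : ProperSpace X := FiniteDimensional.proper 𝕜 X
  have : ProperSpace (X →L[𝕜] Y) := FiniteDimensional.proper 𝕜 _
  exact (isCompact_closedBall _ _).prod (isCompact_sphere _ _)

theorem isCompact_normingPairs (z : StrongDual 𝕜 Y) : IsCompact (normingPairs X z) := by
  have : normingPairs X z = (Metric.closedBall 0 1 ×ˢ Metric.sphere 0 1) ∩
      (fun p : (X →L[𝕜] Y) × X => RCLike.re (z (p.1 p.2))) ⁻¹' {1} := by
    ext p
    simp [normingPairs, and_assoc]
  rw [this]
  exact (isCompact_closedBall_prod_sphere 𝕜 X Y).inter_right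
    (isClosed_singleton.preimage (by fun_prop))

theorem exists_pos_forall_mem_thickening_normingPairs {z : StrongDual 𝕜 Y} (hz : ‖z‖ ≤ 1) {δ : ℝ}
    (hδ : 0 < δ) :
    ∃ η > 0, ∀ (B : X →L[𝕜] Y) (x : X), ‖B‖ ≤ 1 → ‖x‖ = 1 → 1 - η ≤ RCLike.re (z (B x)) →
      (B, x) ∈ Metric.thickening δ (normingPairs X z) := by
  obtain ⟨η, hη, h⟩ := exists_pos_forall_mem_of_sub_le (c := 1)
    (F := fun p => RCLike.re (z (p.1 p.2)))
    (isCompact_closedBall_prod_sphere 𝕜 X Y) (by fun_prop)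
    (Metric.isOpen_thickening (δ := δ) (E := normingPairs X z)) (by
      rintro ⟨B, x⟩ ⟨hB, hx⟩ hBx
      rw [mem_closedBall_zero_iff] at hB
      rw [mem_sphere_zero_iff_norm] at hx
      refine Metric.self_subset_thickening hδ _ ⟨hB, hx, hBx.antisymm' ?_⟩
      calc RCLike.re (z (B x)) ≤ ‖B x‖ := re_apply_le_norm hz _
        _ ≤ 1 := by simpa [hx] using B.le_of_opNorm_le hB x)
  exact ⟨η, hη, fun B x hB hx => h (B, x) ⟨by simpa using hB, by simpa using hx⟩⟩

/-- For a fixed functional this is compactness of the pairs `(B, x)`; a finite net of functionals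
makes `η` uniform, at the price of replacing `y` by a nearby `z` that does not depend on
`(B, x)`. -/
theorem exists_pos_forall_dual_exists_mem_thickening_normingPairs {δ : ℝ} (hδ : 0 < δ) :
    ∃ η > 0, ∀ y : StrongDual 𝕜 Y, ‖y‖ ≤ 1 → ∃ z : StrongDual 𝕜 Y, ‖z‖ ≤ 1 ∧
      ∀ (B : X →L[𝕜] Y) (x : X), ‖B‖ ≤ 1 → ‖x‖ = 1 → 1 - η ≤ RCLike.re (y (B x)) →
        (B, x) ∈ Metric.thickening δ (normingPairs X z) := by
  have : ProperSpace (StrongDual 𝕜 Y) := FiniteDimensional.proper 𝕜 _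
  choose! η η_pos hη using fun (z : StrongDual 𝕜 Y) (hz : ‖z‖ ≤ 1) =>
    exists_pos_forall_mem_thickening_normingPairs (X := X) hz hδ
  obtain ⟨net, net_le, net_cover⟩ :=
    (isCompact_closedBall (0 : StrongDual 𝕜 Y) 1).elim_nhds_subcover
      (fun z => Metric.ball z (η z / 2))
      fun z hz => Metric.ball_mem_nhds z (half_pos (η_pos z (by simpa using hz)))
  simp only [mem_closedBall_zero_iff] at net_le
  obtain ⟨ρ, ρ_le, ρ_pos⟩ : ∃ ρ, (∀ z ∈ net, ρ < η z / 2) ∧ 0 < ρ :=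
    (((Filter.eventually_all_finset net).2 fun z hz => nhdsWithin_le_nhds
      (eventually_lt_nhds (half_pos (η_pos z (net_le z hz))))).and
        (self_mem_nhdsWithin (s := Set.Ioi (0 : ℝ)))).exists
  refine ⟨ρ, ρ_pos, fun y hy => ?_⟩
  obtain ⟨z, hz, hyz⟩ : ∃ z ∈ net, ‖y - z‖ < η z / 2 := by
    simpa [dist_eq_norm] using net_cover (mem_closedBall_zero_iff.2 hy)
  refine ⟨z, net_le z hz, fun B x hB hx hBx => hη z (net_le z hz) B x hB hx ?_⟩
  have norm_Bx : ‖B x‖ ≤ 1 := by simpa [hx] using B.le_of_opNorm_le hB x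
  have : RCLike.re ((y - z) (B x)) ≤ ‖y - z‖ :=
    (RCLike.re_le_norm _).trans (((y - z).le_opNorm _).trans
      (mul_le_of_le_one_right (norm_nonneg _) norm_Bx))
  rw [_root_.sub_apply, map_sub] at this
  linarith [ρ_le z hz]

end FiniteDimensional

theorem exists_stronglyMeasurable_near_of_mem_thickening {Ω E : Type*} [MeasurableSpace Ω]
    [PseudoMetricSpace E] {f : Ω → E} (hf : StronglyMeasurable f) {Z : Set E}
    (hZ : TotallyBounded Z) {δ : ℝ} (hδ : 0 < δ) :
    ∃ f' : Ω → E, StronglyMeasurable f' ∧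
      ∀ ω, f ω ∈ Metric.thickening δ Z → f' ω ∈ Z ∧ dist (f' ω) (f ω) < 2 * δ := by
  rcases Z.eq_empty_or_nonempty with rfl | hZne
  · exact ⟨f, hf, by simp⟩
  borelize E
  obtain ⟨t, htZ, ht_fin, ht_cover⟩ := Metric.finite_approx_of_totallyBounded hZ δ hδ
  obtain ⟨z, hz⟩ := hZne
  have ht_ne : t.Nonempty := by
    obtain ⟨y, hy, -⟩ := Set.mem_iUnion₂.1 (ht_cover hz)
    exact ⟨y, hy⟩
  obtain ⟨e, rfl⟩ := ht_fin.countable.exists_eq_range ht_ne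
  obtain ⟨N, hN⟩ : ∃ N, ∀ y ∈ Set.range e, ∃ k ≤ N, e k = y := by
    choose! k hk using fun (y : E) (hy : y ∈ Set.range e) => hy
    obtain ⟨N, hN⟩ := (ht_fin.image k).bddAbove
    exact ⟨N, fun y hy => ⟨k y, hN ⟨y, hy, rfl⟩, hk y hy⟩⟩
  refine ⟨fun ω => SimpleFunc.nearestPt e N (f ω),
    ((SimpleFunc.nearestPt e N).comp f hf.measurable).stronglyMeasurable,
    fun ω hω => ⟨htZ ⟨_, rfl⟩, ?_⟩⟩
  obtain ⟨z, hz, hfz⟩ := Metric.mem_thickening_iff.1 hω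
  obtain ⟨y, hy, hzy⟩ := Set.mem_iUnion₂.1 (ht_cover hz)
  obtain ⟨k, hkN, rfl⟩ := hN y hy
  have nearest_le : dist (SimpleFunc.nearestPt e N (f ω)) (f ω) ≤ dist (e k) (f ω) := by
    simpa [edist_dist] using SimpleFunc.edist_nearestPt_le e (f ω) hkN
  rw [Metric.mem_ball] at hzy
  linarith [dist_triangle_right (e k) (f ω) z, dist_comm z (e k)]

section RadonNikodym

variable {Ω E : Type*} [MeasurableSpace Ω] {ν : Measure Ω} [SigmaFinite ν]
  [NormedAddCommGroup E] [NormedSpace ℝ E]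

theorem exists_integrable_withDensityᵥ_eq [FiniteDimensional ℝ E] {V : VectorMeasure Ω E}
    (hV : V ≪ᵥ ν.toENNRealVectorMeasure) :
    ∃ g : Ω → E, Integrable g ν ∧ ν.withDensityᵥ g = V := by
  have : CompleteSpace E := FiniteDimensional.complete ℝ E
  let b := Module.finBasis ℝ E
  let c (i) : E →L[ℝ] ℝ := LinearMap.toContinuousLinearMap (b.coord i)
  let W (i) : SignedMeasure Ω := V.mapRange (c i : E →+ ℝ) (c i).continuous
  have W_apply (i s) : W i s = b.repr (V s) i := rfl
  have W_ac (i) : W i ≪ᵥ ν.toENNRealVectorMeasure := fun s hs => by simp [W_apply, hV hs]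
  have integrable_coord (i) : Integrable (fun ω => (W i).rnDeriv ν ω • b i) ν :=
    (SignedMeasure.integrable_rnDeriv (W i) ν).smul_const (b i)
  have integrable_sum := integrable_finsetSum Finset.univ fun i _ => integrable_coord i
  refine ⟨_, integrable_sum, VectorMeasure.ext fun s hs => ?_⟩
  have coord_eq (i) : ∫ ω in s, (W i).rnDeriv ν ω ∂ν = b.repr (V s) i := by
    rw [← withDensityᵥ_apply (SignedMeasure.integrable_rnDeriv (W i) ν) hs,
      SignedMeasure.withDensityᵥ_rnDeriv_eq _ _ (W_ac i), W_apply]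
  rw [withDensityᵥ_apply integrable_sum hs,
    integral_finsetSum _ fun i _ => (integrable_coord i).integrableOn]
  simp_rw [integral_smul_const, coord_eq, b.sum_repr]

theorem ae_enorm_le_of_forall_enorm_withDensityᵥ_le [CompleteSpace E] {g : Ω → E}
    (hg : Integrable g ν) {C : NNReal}
    (hC : ∀ s, MeasurableSet s → ‖ν.withDensityᵥ g s‖ₑ ≤ C * ν s) :
    ∀ᵐ ω ∂ν, ‖g ω‖ₑ ≤ C := by
  have variation_le : (ν.withDensityᵥ g).variation ≤ C • ν :=
    VectorMeasure.variation_le_of_forall_enorm_le hC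
  rw [Measure.variation_withDensityᵥ hg] at variation_le
  refine ae_le_of_forall_setLIntegral_le_of_sigmaFinite₀ hg.1.enorm fun s hs _ => ?_
  simpa [withDensity_apply _ hs] using variation_le s

end RadonNikodym

section Representation

variable {𝕜 X Y Ω : Type*} [RCLike 𝕜] [NormedAddCommGroup X] [NormedSpace 𝕜 X]
  [NormedAddCommGroup Y] [NormedSpace 𝕜 Y]
  [MeasurableSpace Ω] {ν : Measure Ω}

section OperatorMeasure

variable [IsFiniteMeasure ν]

variable (𝕜 X ν) in
/-- The embedding `x ↦ 𝟙_s x` of `X` into `L¹(ν, X)`. -/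
def indicatorConstL1 {s : Set Ω} (hs : MeasurableSet s) : X →L[𝕜] Lp X 1 ν :=
  LinearMap.mkContinuous
    { toFun := indicatorConstLp 1 hs (measure_ne_top ν s)
      map_add' := fun _ _ => indicatorConstLp_add.symm
      map_smul' := fun c x => by
        ext1
        grw [Lp.coeFn_smul, indicatorConstLp_coeFn, indicatorConstLp_coeFn]
        exact .of_eq (Set.indicator_const_smul s c _) }
    (ν.real s) fun x => by
      simpa [mul_comm] using (norm_indicatorConstLp one_ne_zero ENNReal.one_ne_top).le

theorem enorm_comp_indicatorConstL1_le (T : Lp X 1 ν →L[𝕜] Y) {s : Set Ω}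
    (hs : MeasurableSet s) : ‖T ∘L indicatorConstL1 𝕜 X ν hs‖ₑ ≤ ‖T‖ₑ * ν s := by
  have norm_le : ‖T ∘L indicatorConstL1 𝕜 X ν hs‖ ≤ ‖T‖ * ν.real s := by
    grw [ContinuousLinearMap.opNorm_comp_le, indicatorConstL1, LinearMap.mkContinuous_norm_le]
    exact measureReal_nonneg
  rw [← ofReal_norm, ← ofReal_norm, ← ofReal_measureReal, ← ENNReal.ofReal_mul (norm_nonneg T)]
  exact ENNReal.ofReal_le_ofReal norm_le

open Classical in
/-- The vector measure `s ↦ (x ↦ T (𝟙_s x))`, whose Radon–Nikodym derivative is the density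
representing `T`. -/
def operatorMeasure (T : Lp X 1 ν →L[𝕜] Y) : VectorMeasure Ω (X →L[𝕜] Y) :=
  VectorMeasure.of_additive_of_le_measure (μ := ‖T‖₊ • ν)
    (fun s => if hs : MeasurableSet s then T ∘L indicatorConstL1 𝕜 X ν hs else 0)
    (fun s => by
      split_ifs with hs
      · exact enorm_comp_indicatorConstL1_le T hs
      · exact (enorm_zero (E := X →L[𝕜] Y)).trans_le bot_le)
    (fun s t hs ht hst => by
      simp only [hs, ht, hs.union ht, dif_pos]
      ext x
      exact (congrArg T (indicatorConstLp_disjoint_union hs ht (measure_ne_top ν s)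
        (measure_ne_top ν t) hst x)).trans (map_add T _ _))
    fun s hs => dif_neg hs

theorem operatorMeasure_of_measurableSet (T : Lp X 1 ν →L[𝕜] Y) {s : Set Ω}
    (hs : MeasurableSet s) : operatorMeasure T s = T ∘L indicatorConstL1 𝕜 X ν hs :=
  dif_pos hs

theorem enorm_operatorMeasure_le (T : Lp X 1 ν →L[𝕜] Y) {s : Set Ω} (hs : MeasurableSet s) :
    ‖operatorMeasure T s‖ₑ ≤ ‖T‖ₑ * ν s :=
  operatorMeasure_of_measurableSet T hs ▸ enorm_comp_indicatorConstL1_le T hs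

theorem operatorMeasure_absolutelyContinuous (T : Lp X 1 ν →L[𝕜] Y) :
    operatorMeasure T ≪ᵥ ν.toENNRealVectorMeasure :=
  VectorMeasure.AbsolutelyContinuous.mk fun s hs hνs => by
    rw [Measure.toENNRealVectorMeasure_apply_measurable hs] at hνs
    have := enorm_operatorMeasure_le T hs
    rw [hνs, mul_zero] at this
    exact (enorm_eq_zero (E := X →L[𝕜] Y)).1 (le_zero_iff.1 this)

end OperatorMeasure

theorem integrable_density_apply (g : Lp (X →L[𝕜] Y) ⊤ ν) (f : Lp X 1 ν) :
    Integrable (fun ω => g ω (f ω)) ν :=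
  memLp_one_iff_integrable.1 <|
    (ContinuousLinearMap.id 𝕜 (X →L[𝕜] Y)).memLp_of_bilin 1 (Lp.memLp g) (Lp.memLp f)

variable [NormedSpace ℝ Y] [IsScalarTower ℝ 𝕜 Y] [CompleteSpace Y]

/-- The operator `f ↦ ∫ g(ω) f(ω) dν(ω)` from `L¹(ν, X)` to `Y` with the bounded operator-valued
density `g`; it is linear in `g`, so that operators can be compared through their densities. -/
def densityOperator : Lp (X →L[𝕜] Y) ⊤ ν →L[𝕜] Lp X 1 ν →L[𝕜] Y :=
  ContinuousLinearMap.lpPairing ν ⊤ 1 (ContinuousLinearMap.id 𝕜 (X →L[𝕜] Y))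

theorem densityOperator_apply (g : Lp (X →L[𝕜] Y) ⊤ ν) (f : Lp X 1 ν) :
    densityOperator g f = ∫ ω, g ω (f ω) ∂ν :=
  ContinuousLinearMap.lpPairing_eq_integral _ _ _

theorem norm_densityOperator_le {g : Lp (X →L[𝕜] Y) ⊤ ν} {C : ℝ} (hC : 0 ≤ C)
    (hg : ∀ᵐ ω ∂ν, ‖g ω‖ ≤ C) : ‖densityOperator g‖ ≤ C := by
  refine ContinuousLinearMap.opNorm_le_bound _ hC fun f => ?_
  rw [densityOperator_apply, L1.norm_eq_integral_norm, ← integral_const_mul]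
  refine norm_integral_le_of_norm_le ((L1.integrable_coeFn f).norm.const_mul C) ?_
  filter_upwards [hg] with ω hω
  exact (g ω).le_of_opNorm_le hω (f ω)

theorem densityOperator_indicatorConstLp (g : Lp (X →L[𝕜] Y) ⊤ ν) {s : Set Ω}
    (hs : MeasurableSet s) (hνs : ν s ≠ ⊤) (x : X) :
    densityOperator g (indicatorConstLp 1 hs hνs x) = ∫ ω in s, g ω x ∂ν := by
  rw [densityOperator_apply, ← integral_indicator hs]
  refine integral_congr_ae ?_
  filter_upwards [indicatorConstLp_coeFn (p := 1) (hs := hs) (hμs := hνs) (c := x)] with ω hω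
  by_cases h : ω ∈ s <;> simp [hω, h]

variable [IsFiniteMeasure ν]

theorem eq_densityOperator_of_forall_indicatorConstLp
    {T : Lp X 1 ν →L[𝕜] Y} {g : Lp (X →L[𝕜] Y) ⊤ ν} (h : ∀ s (hs : MeasurableSet s) x,
    T (indicatorConstLp 1 hs (measure_ne_top ν s) x) = ∫ ω in s, g ω x ∂ν) :
    T = densityOperator g := by
  ext f
  induction f using Lp.induction ENNReal.one_ne_top with
  | indicatorConst x hs hνs =>
    rw [Lp.simpleFunc.coe_indicatorConst, h, densityOperator_indicatorConstLp]
  | add _ _ _ hTf hTg => rw [map_add, map_add, hTf, hTg]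
  | isClosed => exact isClosed_eq T.continuous (densityOperator g).continuous

theorem exists_eq_densityOperator [FiniteDimensional 𝕜 X] [FiniteDimensional 𝕜 Y]
    (T : Lp X 1 ν →L[𝕜] Y) :
    ∃ g : Lp (X →L[𝕜] Y) ⊤ ν, (∀ᵐ ω ∂ν, ‖g ω‖ ≤ ‖T‖) ∧ T = densityOperator g := by
  have : FiniteDimensional ℝ (X →L[𝕜] Y) := FiniteDimensional.trans ℝ 𝕜 _
  obtain ⟨g, hg, hgT⟩ := exists_integrable_withDensityᵥ_eq (operatorMeasure_absolutelyContinuous T)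
  have g_bound : ∀ᵐ ω ∂ν, ‖g ω‖ ≤ ‖T‖ := by
    filter_upwards [ae_enorm_le_of_forall_enorm_withDensityᵥ_le hg (C := ‖T‖₊) fun s hs =>
      hgT ▸ enorm_operatorMeasure_le T hs] with ω hω
    exact enorm_le_iff_norm_le.1 hω
  let G := (memLp_top_of_bound hg.1 _ g_bound).toLp g
  have G_eq : G =ᵐ[ν] g := MemLp.coeFn_toLp _
  refine ⟨G, ?_, eq_densityOperator_of_forall_indicatorConstLp fun s hs x => ?_⟩
  · filter_upwards [g_bound, G_eq] with ω hω h
    rwa [h]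
  · change (T ∘L indicatorConstL1 𝕜 X ν hs) x = _
    rw [← operatorMeasure_of_measurableSet, ← hgT, withDensityᵥ_apply hg hs,
      ContinuousLinearMap.integral_apply hg.integrableOn]
    refine integral_congr_ae (ae_restrict_of_ae ?_)
    filter_upwards [G_eq] with ω h
    rw [h]

end Representation

section WeightedL1

variable {𝕜 X Ω : Type*} [RCLike 𝕜] [NormedAddCommGroup X] [NormedSpace 𝕜 X] [NormedSpace ℝ X]
  [MeasurableSpace Ω] {μ μ₁ μ₂ : Measure Ω} {φ : Ω → ℝ≥0}

theorem integrable_smul_of_withDensity_le (hφ : Measurable φ)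
    (h : μ₂.withDensity (fun ω => φ ω) ≤ μ₁) {f : Ω → X} (hf : Integrable f μ₁) :
    Integrable (fun ω => φ ω • f ω) μ₂ :=
  (integrable_withDensity_iff_integrable_smul hφ).1 (hf.mono_measure h)

theorem ae_eq_smul_of_withDensity_le (hφ : Measurable φ)
    (h : μ₂.withDensity (fun ω => φ ω) ≤ μ₁) {f g : Ω → X} (hfg : f =ᵐ[μ₁] g) :
    (fun ω => φ ω • f ω) =ᵐ[μ₂] fun ω => φ ω • g ω := by
  filter_upwards [(ae_withDensity_iff hφ.coe_nnreal_ennreal).1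
    (ae_mono h hfg)] with ω hω
  rcases eq_or_ne (φ ω) 0 with h0 | h0
  · simp [h0]
  · rw [hω (by simpa using h0)]

theorem integral_norm_smul_eq_integral_withDensity (hφ : Measurable φ) (f : Ω → X) :
    ∫ ω, ‖φ ω • f ω‖ ∂μ = ∫ ω, ‖f ω‖ ∂μ.withDensity (fun ω => φ ω) := by
  simp [integral_withDensity_eq_integral_smul hφ, NNReal.smul_def, norm_smul]

theorem withDensity_withDensity_inv_le (hφ : Measurable φ) :
    (μ.withDensity (fun ω => φ ω)).withDensity (fun ω => (φ⁻¹ ω : ℝ≥0)) ≤ μ := by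
  rw [← withDensity_mul _ hφ.coe_nnreal_ennreal hφ.inv.coe_nnreal_ennreal]
  calc _ ≤ μ.withDensity 1 := withDensity_mono <| .of_forall fun ω => by
        simpa [← ENNReal.coe_mul] using mul_inv_le_one
    _ = μ := withDensity_one

theorem ae_ne_zero_withDensity (hφ : Measurable φ) :
    ∀ᵐ ω ∂μ.withDensity (fun ω => φ ω), φ ω ≠ 0 :=
  (ae_withDensity_iff hφ.coe_nnreal_ennreal).2 <| .of_forall fun ω hω => by simpa using hω

variable [IsScalarTower ℝ 𝕜 X]

variable (𝕜 X) in
/-- Multiplication by the weight `φ` as an operator `L¹(μ₁, X) → L¹(μ₂, X)`; it is contractive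
when `φ dμ₂ ≤ dμ₁`. -/
def weightL1 (hφ : Measurable φ) (h : μ₂.withDensity (fun ω => φ ω) ≤ μ₁) :
    Lp X 1 μ₁ →L[𝕜] Lp X 1 μ₂ :=
  LinearMap.mkContinuous
    { toFun := fun f =>
        (integrable_smul_of_withDensity_le hφ h (L1.integrable_coeFn f)).toL1 _
      map_add' := fun f g => by
        rw [← Integrable.toL1_add]
        refine (Integrable.toL1_eq_toL1_iff _ _ _ _).2 ?_
        filter_upwards [ae_eq_smul_of_withDensity_le hφ h (Lp.coeFn_add f g)] with ω hω
        rw [hω, Pi.add_apply, Pi.add_apply, smul_add]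
      map_smul' := fun c f => by
        rw [RingHom.id_apply, ← Integrable.toL1_smul']
        refine (Integrable.toL1_eq_toL1_iff _ _ _ _).2 ?_
        filter_upwards [ae_eq_smul_of_withDensity_le hφ h (Lp.coeFn_smul c f)] with ω hω
        rw [hω, Pi.smul_apply, Pi.smul_apply, smul_comm] }
    1 fun f => by
      have hf := L1.integrable_coeFn f
      calc ‖(integrable_smul_of_withDensity_le hφ h hf).toL1 _‖
          = ∫ ω, ‖f ω‖ ∂μ₂.withDensity (fun ω => φ ω) := by
            rw [L1.norm_of_fun_eq_integral_norm, integral_norm_smul_eq_integral_withDensity hφ]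
        _ ≤ ∫ ω, ‖f ω‖ ∂μ₁ :=
          integral_mono_measure h (.of_forall fun _ => norm_nonneg _) hf.norm
        _ = 1 * ‖f‖ := by rw [one_mul, L1.norm_eq_integral_norm]

theorem coeFn_weightL1 (hφ : Measurable φ) (h : μ₂.withDensity (fun ω => φ ω) ≤ μ₁)
    (f : Lp X 1 μ₁) : weightL1 𝕜 X hφ h f =ᵐ[μ₂] fun ω => φ ω • f ω :=
  (integrable_smul_of_withDensity_le hφ h (L1.integrable_coeFn f)).coeFn_toL1

theorem norm_weightL1_le (hφ : Measurable φ) (h : μ₂.withDensity (fun ω => φ ω) ≤ μ₁) :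
    ‖weightL1 𝕜 X hφ h‖ ≤ 1 :=
  LinearMap.mkContinuous_norm_le _ zero_le_one _

theorem norm_weightL1_apply (hφ : Measurable φ) (h : μ₂.withDensity (fun ω => φ ω) ≤ μ₁)
    (f : Lp X 1 μ₁) :
    ‖weightL1 𝕜 X hφ h f‖ = ∫ ω, ‖f ω‖ ∂μ₂.withDensity (fun ω => φ ω) := by
  rw [← integral_norm_smul_eq_integral_withDensity hφ]
  exact L1.norm_of_fun_eq_integral_norm
    (integrable_smul_of_withDensity_le hφ h (L1.integrable_coeFn f))

variable (𝕜 X μ) in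
/-- The isometric embedding `f ↦ φ f` of `L¹(φ dμ, X)` into `L¹(μ, X)`. -/
def ofWithDensityL1 (hφ : Measurable φ) :
    Lp X 1 (μ.withDensity fun ω => φ ω) →L[𝕜] Lp X 1 μ :=
  weightL1 𝕜 X hφ le_rfl

variable (𝕜 X μ) in
/-- The left inverse `f ↦ φ⁻¹ f` of `ofWithDensityL1`, where `φ⁻¹ = 0` on the zero set of `φ`. -/
def toWithDensityL1 (hφ : Measurable φ) :
    Lp X 1 μ →L[𝕜] Lp X 1 (μ.withDensity fun ω => φ ω) :=
  weightL1 𝕜 X hφ.inv (withDensity_withDensity_inv_le hφ)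

theorem toWithDensityL1_ofWithDensityL1 (hφ : Measurable φ)
    (f : Lp X 1 (μ.withDensity fun ω => φ ω)) :
    toWithDensityL1 𝕜 X μ hφ (ofWithDensityL1 𝕜 X μ hφ f) = f := by
  ext1
  filter_upwards [coeFn_weightL1 (𝕜 := 𝕜) hφ.inv (withDensity_withDensity_inv_le hφ)
      (ofWithDensityL1 𝕜 X μ hφ f),
    (withDensity_absolutelyContinuous μ _).ae_eq (coeFn_weightL1 (𝕜 := 𝕜) hφ le_rfl f),
    ae_ne_zero_withDensity hφ] with ω hR hV hω
  rw [toWithDensityL1, hR, ofWithDensityL1, hV, Pi.inv_apply, inv_smul_smul₀ hω]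

theorem coeFn_ofWithDensityL1_toWithDensityL1 (hφ : Measurable φ) (f : Lp X 1 μ) :
    ofWithDensityL1 𝕜 X μ hφ (toWithDensityL1 𝕜 X μ hφ f) =ᵐ[μ] {ω | φ ω ≠ 0}.indicator f := by
  filter_upwards [coeFn_weightL1 (𝕜 := 𝕜) hφ le_rfl (toWithDensityL1 𝕜 X μ hφ f),
    ae_eq_smul_of_withDensity_le hφ le_rfl
      (coeFn_weightL1 (𝕜 := 𝕜) hφ.inv (withDensity_withDensity_inv_le hφ) f)] with ω hV hR
  rw [ofWithDensityL1, hV, toWithDensityL1, hR]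
  by_cases hω : φ ω = 0 <;> simp [hω, smul_inv_smul₀]

theorem norm_toWithDensityL1_add_norm_sub (hφ : Measurable φ) (f : Lp X 1 μ) :
    ‖toWithDensityL1 𝕜 X μ hφ f‖ +
      ‖f - ofWithDensityL1 𝕜 X μ hφ (toWithDensityL1 𝕜 X μ hφ f)‖ = ‖f‖ := by
  have norm_of (h : Lp X 1 (μ.withDensity fun ω => φ ω)) :
      ‖ofWithDensityL1 𝕜 X μ hφ h‖ = ‖h‖ := by
    rw [ofWithDensityL1, norm_weightL1_apply, L1.norm_eq_integral_norm]
  rw [← norm_of, L1.norm_eq_integral_norm, L1.norm_eq_integral_norm, L1.norm_eq_integral_norm,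
    ← integral_add (L1.integrable_coeFn _).norm (L1.integrable_coeFn _).norm]
  refine integral_congr_ae ?_
  filter_upwards [coeFn_ofWithDensityL1_toWithDensityL1 (𝕜 := 𝕜) hφ f,
    Lp.coeFn_sub f (ofWithDensityL1 𝕜 X μ hφ (toWithDensityL1 𝕜 X μ hφ f))] with ω hVR hsub
  rw [hsub, Pi.sub_apply, hVR]
  by_cases hω : φ ω = 0 <;> simp [hω]

end WeightedL1

section Polar

variable {𝕜 X Ω : Type*} [RCLike 𝕜] [NormedAddCommGroup X] [MeasurableSpace Ω]
  {μ : Measure Ω}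

theorem measurable_nnnorm_coeFn (x : Lp X 1 μ) : Measurable fun ω => ‖x ω‖₊ :=
  (Lp.stronglyMeasurable x).nnnorm.measurable

theorem isProbabilityMeasure_withDensity_nnnorm {x : Lp X 1 μ} (hx : ‖x‖ = 1) :
    IsProbabilityMeasure (μ.withDensity fun ω => ‖x ω‖₊) :=
  ⟨by
    rw [withDensity_apply _ .univ, Measure.restrict_univ]
    calc ∫⁻ ω, ‖x ω‖ₑ ∂μ = ‖x‖ₑ := by rw [Lp.enorm_def, eLpNorm_one_eq_lintegral_enorm]
      _ = 1 := by rw [← ofReal_norm, hx, ENNReal.ofReal_one]⟩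

variable [NormedSpace 𝕜 X] [NormedSpace ℝ X] [IsScalarTower ℝ 𝕜 X]

theorem ofWithDensityL1_toWithDensityL1_nnnorm (x : Lp X 1 μ) :
    ofWithDensityL1 𝕜 X μ (measurable_nnnorm_coeFn x)
      (toWithDensityL1 𝕜 X μ (measurable_nnnorm_coeFn x) x) = x := by
  ext1
  filter_upwards [coeFn_ofWithDensityL1_toWithDensityL1 (𝕜 := 𝕜) (measurable_nnnorm_coeFn x) x]
    with ω hω
  by_cases h : x ω = 0 <;> simp [hω, h]

theorem norm_toWithDensityL1_nnnorm_ae_eq_one (x : Lp X 1 μ) :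
    ∀ᵐ ω ∂μ.withDensity fun ω => ‖x ω‖₊,
      ‖toWithDensityL1 𝕜 X μ (measurable_nnnorm_coeFn x) x ω‖ = 1 := by
  have hφ := measurable_nnnorm_coeFn x
  filter_upwards [coeFn_weightL1 (𝕜 := 𝕜) hφ.inv (withDensity_withDensity_inv_le hφ) x,
    ae_ne_zero_withDensity hφ] with ω hR hω
  rw [toWithDensityL1, hR]
  simp_all [NNReal.smul_def, norm_smul]

end Polar

section ProbabilityMeasure

theorem mul_measureReal_compl_le_one_sub_integral {Ω : Type*} [MeasurableSpace Ω] {ν : Measure Ω}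
    [IsProbabilityMeasure ν] {φ : Ω → ℝ} (hφ : Integrable φ ν) (hφ_le : ∀ᵐ ω ∂ν, φ ω ≤ 1)
    {G : Set Ω} {η : ℝ} (hη : 0 ≤ η) (hG : ∀ᵐ ω ∂ν, ω ∉ G → φ ω ≤ 1 - η) :
    η * ν.real Gᶜ ≤ 1 - ∫ ω, φ ω ∂ν := by
  have hGc : Gᶜ ≤ᵐ[ν] {ω | η ≤ 1 - φ ω} := by
    filter_upwards [hG] with ω hω hωG
    exact le_sub_comm.1 (hω hωG)
  calc η * ν.real Gᶜ ≤ η * ν.real {ω | η ≤ 1 - φ ω} :=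
        mul_le_mul_of_nonneg_left
          (ENNReal.toReal_mono (measure_ne_top ν _) (measure_mono_ae hGc)) hη
    _ ≤ ∫ ω, (1 - φ ω) ∂ν := mul_meas_ge_le_integral_of_nonneg
        (hφ_le.mono fun ω hω => sub_nonneg.2 hω) ((integrable_const 1).sub hφ) η
    _ = 1 - ∫ ω, φ ω ∂ν := by simp [integral_sub (integrable_const 1) hφ]

theorem norm_L1_le_add_measureReal_compl {Ω E : Type*} [MeasurableSpace Ω] {ν : Measure Ω}
    [IsProbabilityMeasure ν] [NormedAddCommGroup E] {f : Lp E 1 ν} {G : Set Ω}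
    (hG : MeasurableSet G) {r : ℝ} (hr : 0 ≤ r) (hfG : ∀ᵐ ω ∂ν, ω ∈ G → ‖f ω‖ ≤ r)
    (hf : ∀ᵐ ω ∂ν, ω ∉ G → ‖f ω‖ ≤ 1) :
    ‖f‖ ≤ r + ν.real Gᶜ := by
  have integrable_bad : Integrable (Gᶜ.indicator fun _ => (1 : ℝ)) ν :=
    (integrable_const 1).indicator hG.compl
  calc ‖f‖ = ∫ ω, ‖f ω‖ ∂ν := L1.norm_eq_integral_norm f
    _ ≤ ∫ ω, (r + Gᶜ.indicator (fun _ => (1 : ℝ)) ω) ∂ν := by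
      refine integral_mono_ae (L1.integrable_coeFn f).norm
        ((integrable_const r).add integrable_bad) ?_
      filter_upwards [hfG, hf] with ω hω hω'
      by_cases h : ω ∈ G
      · simpa [h] using hω h
      · simpa [h] using (hω' h).trans (le_add_of_nonneg_left hr)
    _ = r + ν.real Gᶜ := by
      rw [integral_add (integrable_const r) integrable_bad, integral_indicator hG.compl]
      simp

theorem exists_Lp_ae_eq_piecewise {Ω E : Type*} [MeasurableSpace Ω] {ν : Measure Ω}
    [IsFiniteMeasure ν] [NormedAddCommGroup E] {q : ENNReal} (g : Lp E q ν) {h : Ω → E}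
    (hh : StronglyMeasurable h) {G : Set Ω} (hG : MeasurableSet G) {C : ℝ}
    (hC : ∀ ω ∈ G, ‖h ω‖ ≤ C) :
    ∃ g' : Lp E q ν, ∀ᵐ ω ∂ν, (ω ∈ G → g' ω = h ω) ∧ (ω ∉ G → g' ω = g ω) := by
  classical
  have memLp_h : MemLp h q (ν.restrict G) :=
    MemLp.of_bound hh.aestronglyMeasurable C (ae_restrict_of_forall_mem hG hC)
  have memLp_piecewise : MemLp (G.piecewise h g) q ν :=
    memLp_h.piecewise hG ((Lp.memLp g).restrict Gᶜ)
  refine ⟨memLp_piecewise.toLp _, ?_⟩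
  filter_upwards [memLp_piecewise.coeFn_toLp] with ω hω
  exact ⟨fun h => by simp [hω, h], fun h => by simp [hω, h]⟩

variable {𝕜 X Y Ω : Type*} [RCLike 𝕜] [NormedAddCommGroup X] [NormedSpace 𝕜 X]
  [NormedAddCommGroup Y] [NormedSpace 𝕜 Y] [NormedSpace ℝ Y] [IsScalarTower ℝ 𝕜 Y]
  [MeasurableSpace Ω] {ν : Measure Ω}

section CompleteSpace

variable [CompleteSpace Y]

theorem re_dual_densityOperator_apply (z : StrongDual 𝕜 Y) (g : Lp (X →L[𝕜] Y) ⊤ ν)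
    (f : Lp X 1 ν) :
    RCLike.re (z (densityOperator g f)) = ∫ ω, RCLike.re (z (g ω (f ω))) ∂ν := by
  have hgf := integrable_density_apply g f
  rw [densityOperator_apply, ← z.integral_comp_comm hgf, integral_re (z.integrable_comp hgf)]

theorem norm_densityOperator_apply_eq {z : StrongDual 𝕜 Y} (hz : ‖z‖ ≤ 1)
    {g : Lp (X →L[𝕜] Y) ⊤ ν} (hg : ∀ᵐ ω ∂ν, ‖g ω‖ ≤ 1) {f : Lp X 1 ν}
    (hf : ∀ᵐ ω ∂ν, RCLike.re (z (g ω (f ω))) = ‖f ω‖) :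
    ‖densityOperator g f‖ = ‖f‖ := by
  refine le_antisymm ?_ ?_
  · simpa using (densityOperator g).le_of_opNorm_le (norm_densityOperator_le zero_le_one hg) f
  · calc ‖f‖ = ∫ ω, RCLike.re (z (g ω (f ω))) ∂ν := by
          rw [L1.norm_eq_integral_norm, integral_congr_ae hf]
      _ = RCLike.re (z (densityOperator g f)) := (re_dual_densityOperator_apply z g f).symm
      _ ≤ ‖densityOperator g f‖ := re_apply_le_norm hz _

variable [IsProbabilityMeasure ν]

theorem hasNormAttainingPerturbation_densityOperator {z : StrongDual 𝕜 Y} (hz : ‖z‖ ≤ 1)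
    {g g' : Lp (X →L[𝕜] Y) ⊤ ν} {u w : Lp X 1 ν} {G : Set Ω} {r ε : ℝ}
    (hg : ∀ᵐ ω ∂ν, ‖g ω‖ ≤ 1) (hu : ∀ᵐ ω ∂ν, ‖u ω‖ = 1) (hG : MeasurableSet G) (hr : 0 ≤ r)
    (hε : r + ν.real Gᶜ < ε)
    (h_good : ∀ᵐ ω ∂ν, ω ∈ G →
      (g' ω, w ω) ∈ normingPairs X z ∧ dist (g' ω, w ω) (g ω, u ω) ≤ r)
    (h_bad : ∀ᵐ ω ∂ν, ω ∉ G → g' ω = g ω ∧ w ω = 0) :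
    HasNormAttainingPerturbation (densityOperator g) u ε := by
  have norm_g' : ∀ᵐ ω ∂ν, ‖g' ω‖ ≤ 1 := by
    filter_upwards [hg, h_good, h_bad] with ω hgω good bad
    by_cases h : ω ∈ G
    · exact (good h).1.1
    · rwa [(bad h).1]
  refine ⟨densityOperator g', w, norm_densityOperator_le zero_le_one norm_g',
    norm_densityOperator_apply_eq hz norm_g' ?_, ?_, ?_⟩
  · filter_upwards [h_good, h_bad] with ω good bad
    by_cases h : ω ∈ G
    · rw [(good h).1.2.2, (good h).1.2.1]
    · simp [(bad h).2]
  · refine (norm_L1_le_add_measureReal_compl hG hr ?_ ?_).trans_lt hε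
    · filter_upwards [Lp.coeFn_sub u w, h_good] with ω sub good hω
      rw [sub, Pi.sub_apply, ← dist_eq_norm, dist_comm]
      exact (le_max_right _ _).trans (good hω).2
    · filter_upwards [Lp.coeFn_sub u w, h_bad, hu] with ω sub bad huω hω
      rw [sub, Pi.sub_apply, (bad hω).2, sub_zero, huω]
  · rw [← map_sub]
    refine (norm_densityOperator_le hr ?_).trans_lt
      ((le_add_of_nonneg_right measureReal_nonneg).trans_lt hε)
    filter_upwards [Lp.coeFn_sub g' g, h_good, h_bad] with ω sub good bad
    rw [sub, Pi.sub_apply]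
    by_cases h : ω ∈ G
    · rw [← dist_eq_norm]
      exact (le_max_left _ _).trans (good h).2
    · rwa [(bad h).1, sub_self, norm_zero]

variable [FiniteDimensional 𝕜 X] [FiniteDimensional 𝕜 Y]

theorem hasNormAttainingPerturbation_of_measureReal_compl_thickening
    {z : StrongDual 𝕜 Y} (hz : ‖z‖ ≤ 1) {g : Lp (X →L[𝕜] Y) ⊤ ν} (hg : ∀ᵐ ω ∂ν, ‖g ω‖ ≤ 1)
    {u : Lp X 1 ν} (hu : ∀ᵐ ω ∂ν, ‖u ω‖ = 1) {δ ε : ℝ} (hδ : 0 < δ)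
    (hε : 2 * δ + ν.real {ω | (g ω, u ω) ∈ Metric.thickening δ (normingPairs X z)}ᶜ < ε) :
    HasNormAttainingPerturbation (densityOperator g) u ε := by
  have measurable_gu : StronglyMeasurable fun ω => (g ω, u ω) :=
    (Lp.stronglyMeasurable g).prodMk (Lp.stronglyMeasurable u)
  have measurable_good :
      MeasurableSet {ω | (g ω, u ω) ∈ Metric.thickening δ (normingPairs X z)} := by
    borelize ((X →L[𝕜] Y) × X)
    exact measurable_gu.measurable Metric.isOpen_thickening.measurableSet
  obtain ⟨p, hp, p_near⟩ := exists_stronglyMeasurable_near_of_mem_thickening measurable_gu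
    (isCompact_normingPairs z).totallyBounded hδ
  obtain ⟨g', hg'⟩ := exists_Lp_ae_eq_piecewise g (continuous_fst.comp_stronglyMeasurable hp)
    measurable_good fun ω hω => (p_near ω hω).1.1
  obtain ⟨w, hw⟩ := exists_Lp_ae_eq_piecewise (0 : Lp X 1 ν)
    (continuous_snd.comp_stronglyMeasurable hp) measurable_good fun ω hω => (p_near ω hω).1.2.1.le
  refine hasNormAttainingPerturbation_densityOperator hz hg hu measurable_good (by positivity) hε
    (g' := g') (w := w) ?_ ?_
  · filter_upwards [hg', hw] with ω hg'ω hwω h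
    rw [hg'ω.1 h, hwω.1 h]
    exact ⟨(p_near ω h).1, (p_near ω h).2.le⟩
  · filter_upwards [hg', hw, Lp.coeFn_zero X 1 ν] with ω hg'ω hwω zero h
    exact ⟨hg'ω.2 h, (hwω.2 h).trans zero⟩

end CompleteSpace

variable [FiniteDimensional 𝕜 X] [FiniteDimensional 𝕜 Y]

variable (𝕜 X Y Ω) in
theorem exists_pos_forall_isProbabilityMeasure_hasNormAttainingPerturbation {ε : ℝ}
    (hε : 0 < ε) :
    ∃ η > 0, ∀ (ν : Measure Ω) [IsProbabilityMeasure ν] (T : Lp X 1 ν →L[𝕜] Y), ‖T‖ ≤ 1 →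
      ∀ u : Lp X 1 ν, (∀ᵐ ω ∂ν, ‖u ω‖ = 1) → 1 - η < ‖T u‖ →
        HasNormAttainingPerturbation T u ε := by
  have := FiniteDimensional.complete 𝕜 Y
  obtain ⟨η, hη, h⟩ := exists_pos_forall_dual_exists_mem_thickening_normingPairs
    (𝕜 := 𝕜) (X := X) (Y := Y) (δ := ε / 4) (by positivity)
  refine ⟨η * (ε / 2), by positivity, fun ν _ T hT u hu hTu => ?_⟩
  obtain ⟨g, norm_g, rfl⟩ := exists_eq_densityOperator T
  replace norm_g : ∀ᵐ ω ∂ν, ‖g ω‖ ≤ 1 := norm_g.mono fun ω hω => hω.trans hT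
  obtain ⟨y, hy, hyTu⟩ := exists_dual_vector'' 𝕜 (densityOperator g u)
  obtain ⟨z, hz, mem_thickening⟩ := h y hy
  have integral_eq : ∫ ω, RCLike.re (y (g ω (u ω))) ∂ν = ‖densityOperator g u‖ := by
    rw [← re_dual_densityOperator_apply, hyTu, RCLike.ofReal_re]
  have bad_small := mul_measureReal_compl_le_one_sub_integral
    (G := {ω | (g ω, u ω) ∈ Metric.thickening (ε / 4) (normingPairs X z)})
    (y.integrable_comp (integrable_density_apply g u)).re (by
      filter_upwards [norm_g, hu] with ω hgω huω
      exact (re_apply_le_norm hy _).trans (by simpa [huω] using (g ω).le_of_opNorm_le hgω (u ω)))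
    hη.le (by
      filter_upwards [norm_g, hu] with ω hgω huω hω
      exact (not_le.1 fun hle => hω (mem_thickening _ _ hgω huω hle)).le)
  refine hasNormAttainingPerturbation_of_measureReal_compl_thickening hz norm_g hu
    (δ := ε / 4) (by positivity) ?_
  rw [integral_eq] at bad_small
  linarith [lt_of_mul_lt_mul_left (bad_small.trans_lt (sub_lt_comm.1 hTu)) hη.le]

end ProbabilityMeasure

theorem exists_pos_forall_hasNormAttainingPerturbation {𝕜 X Y Ω : Type*} [RCLike 𝕜]
    [NormedAddCommGroup X] [NormedSpace 𝕜 X] [NormedSpace ℝ X] [IsScalarTower ℝ 𝕜 X]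
    [FiniteDimensional 𝕜 X] [NormedAddCommGroup Y] [NormedSpace 𝕜 Y] [NormedSpace ℝ Y]
    [IsScalarTower ℝ 𝕜 Y] [FiniteDimensional 𝕜 Y] [MeasurableSpace Ω] (μ : Measure Ω) {ε : ℝ}
    (hε : 0 < ε) :
    ∃ η > 0, ∀ T : Lp X 1 μ →L[𝕜] Y, ‖T‖ ≤ 1 → ∀ x : Lp X 1 μ, ‖x‖ = 1 → 1 - η < ‖T x‖ →
      HasNormAttainingPerturbation T x ε := by
  obtain ⟨η, hη, h⟩ :=
    exists_pos_forall_isProbabilityMeasure_hasNormAttainingPerturbation 𝕜 X Y Ω hε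
  refine ⟨η, hη, fun T hT x hx hTx => ?_⟩
  have hφ := measurable_nnnorm_coeFn x
  have := isProbabilityMeasure_withDensity_nnnorm hx
  have norm_V : ‖ofWithDensityL1 𝕜 X μ hφ‖ ≤ 1 := norm_weightL1_le hφ le_rfl
  have x_eq := ofWithDensityL1_toWithDensityL1_nnnorm (𝕜 := 𝕜) x
  rw [← x_eq]
  refine .of_l1Summand hT norm_V (toWithDensityL1_ofWithDensityL1 hφ)
    (fun f => (norm_toWithDensityL1_add_norm_sub hφ f).le) (h _ _ ?_ _ ?_ ?_)
  · exact (ContinuousLinearMap.opNorm_comp_le _ _).trans (mul_le_one₀ hT (norm_nonneg _) norm_V)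
  · exact norm_toWithDensityL1_nnnorm_ae_eq_one x
  · rwa [ContinuousLinearMap.comp_apply, x_eq]

theorem isCompactOperator_of_properSpace {𝕜 E Y : Type*} [NontriviallyNormedField 𝕜]
    [SeminormedAddCommGroup E] [NormedSpace 𝕜 E] [SeminormedAddCommGroup Y] [NormedSpace 𝕜 Y]
    [ProperSpace Y] (S : E →L[𝕜] Y) : IsCompactOperator S :=
  ⟨Metric.closedBall 0 1, isCompact_closedBall 0 1,
    S.continuous.continuousAt.preimage_mem_nhds
      (by simpa using Metric.closedBall_mem_nhds (0 : Y) one_pos)⟩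

/-- If X and Y are finite-dimensional, then (L₁(μ, X), Y) has the BPBp for compact
operators, for any measure μ. -/
theorem bpbp_compact_L1_finiteDimensional {𝕜 : Type*} [RCLike 𝕜] {X Y : Type*}
    [NormedAddCommGroup X] [NormedSpace 𝕜 X] [FiniteDimensional 𝕜 X]
    [NormedAddCommGroup Y] [NormedSpace 𝕜 Y] [FiniteDimensional 𝕜 Y]
    {Ω : Type*} [MeasurableSpace Ω] (μ : MeasureTheory.Measure Ω) :
    BPBpCompact 𝕜 (MeasureTheory.Lp X 1 μ) Y := by
  let _ : NormedSpace ℝ X := NormedSpace.restrictScalars ℝ 𝕜 X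
  let _ : NormedSpace ℝ Y := NormedSpace.restrictScalars ℝ 𝕜 Y
  have : IsScalarTower ℝ 𝕜 X := RestrictScalars.isScalarTower ℝ 𝕜 X
  have : IsScalarTower ℝ 𝕜 Y := RestrictScalars.isScalarTower ℝ 𝕜 Y
  have : ProperSpace Y := FiniteDimensional.proper 𝕜 Y
  choose! η η_pos hη using fun (ε : ℝ) (hε : 0 < ε) =>
    exists_pos_forall_hasNormAttainingPerturbation (𝕜 := 𝕜) (X := X) (Y := Y) μ hε
  refine ⟨fun ε => η (min (ε / 2) 1), fun ε hε => ?_⟩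
  have min_pos : 0 < min (ε / 2) 1 := by positivity
  refine ⟨η_pos _ min_pos, fun T _ hT x₀ hx₀ hTx₀ => ?_⟩
  obtain ⟨S, x₁, hS, hx₁, hSx₁, hxx₁, hST⟩ :=
    (hη _ min_pos T hT.le x₀ hx₀ hTx₀).exists_norm_eq_one hx₀ (min_le_right _ _)
  have min_le : min (ε / 2) 1 ≤ ε / 2 := min_le_left _ _
  exact ⟨S, x₁, isCompactOperator_of_properSpace S, hS, hx₁, hSx₁, by linarith, by linarith⟩
end
end
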